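/- Uniqueness for the exterior impedance problem for Maxwell's equations (Lemma 1, stated for a ball): Let a > 0, let ω, ε₀, μ₀ be positive reals, set k = ω√(ε₀μ₀), and let ζ ∈ ℂ with Re ζ ≥ 0 and ζ ≠ 0. Suppose E, H : ℝ³ → ℂ³ are continuous on {x : |x| ≥ a}, continuously differentiable on {x : |x| > a}, and satisfy: (i) curl E = iωμ₀ H and curl H = −iωε₀ E on {|x| > a}; (ii) the impedance boundary condition N × (E × N) = ζ (N × H) at every point x with |x| = a, where N = x/a is the outward unit normal to the ball; (iii) the Sommerfeld radiation conditions: sup_{|x|=R} ‖R(∂E/∂r(x) − ik E(x))‖ → 0 and sup_{|x|=R} ‖R(∂H/∂r(x) − ik H(x))‖ → 0 as R → ∞, where ∂/∂r denotes the radial derivative (x/|x|)·∇. Then E = 0 and H = 0 on {x : |x| ≥ a}. -/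

import Mathlib

/- Uniqueness for the exterior impedance problem for Maxwell's equations
(Lemma 1 of the paper, stated for the exterior of a ball of radius a). -/

open MeasureTheory Complex

noncomputable section

/-- Points of physical space: ℝ³ with the Euclidean norm. -/
abbrev E3 := EuclideanSpace ℝ (Fin 3)

/-- Partial derivative of a complex-valued function on ℝ³ in the j-th coordinate direction. -/
def pdC (f : E3 → ℂ) (j : Fin 3) (x : E3) : ℂ :=
  fderiv ℝ f x (EuclideanSpace.single j (1 : ℝ))

/-- The curl of a vector field ℝ³ → ℂ³, defined componentwise:
(curl F)₁ = ∂₂F₃ − ∂₃F₂, (curl F)₂ = ∂₃F₁ − ∂₁F₃, (curl F)₃ = ∂₁F₂ − ∂₂F₁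
(indices 0,1,2 in Lean). -/
def curlC (F : E3 → Fin 3 → ℂ) : E3 → Fin 3 → ℂ := fun x =>
  ![pdC (fun y => F y 2) 1 x - pdC (fun y => F y 1) 2 x,
    pdC (fun y => F y 0) 2 x - pdC (fun y => F y 2) 0 x,
    pdC (fun y => F y 1) 0 x - pdC (fun y => F y 0) 1 x]

/-- Cross product of two vectors in ℂ³. -/
def crossC (A B : Fin 3 → ℂ) : Fin 3 → ℂ :=
  ![A 1 * B 2 - A 2 * B 1, A 2 * B 0 - A 0 * B 2, A 0 * B 1 - A 1 * B 0]

/-- Radial derivative of a field ℝ³ → ℂ³ at x ≠ 0: the directional derivative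
in the direction x/|x|. -/
def radialDeriv (F : E3 → Fin 3 → ℂ) (x : E3) : Fin 3 → ℂ :=
  fderiv ℝ F x (‖x‖⁻¹ • x)

/-!
The energy flux `Re ∫ x · (E × H̄)` has the same value on all spheres `|x| = r`, because
`Re div (E × H̄) = 0`, and the impedance condition makes it nonpositive for `r = a`. Up to the flux
of a curl, which vanishes, `Im ∫ Ē · ∂E/∂r` is a positive multiple of it. Expanding the square in
`∫ |∂E/∂r - ikE|²`, the radiation condition therefore gives `∫ |E|² → 0` and `∫ |∂E/∂r|² → 0` over
spheres of growing radius.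

Each component `u` of `E` solves the Helmholtz equation, in a form suited to fields that are only
`C¹`: for every polynomial `P`, the flux of `P∇u - u∇P` through the sphere of radius `r` has
derivative `-∫ (k²P + ΔP)u`. If `P` is homogeneous of degree `n`, then `∫ u ΔP = 0` by induction on
`n`, so that the moment `∫ P u` over the sphere solves a spherical Bessel equation in `r`, and the
only solution with the above decay is zero. Since all its polynomial moments vanish, `u = 0` by the
Stone–Weierstrass theorem. Finally `curl E = iωμ₀H` gives `H = 0`.
-/

section SphereIntegral

open Metric Topology

theorem isOpen_setOf_contDiffAt {V F : Type*} [NormedAddCommGroup V] [NormedSpace ℝ V]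
    [NormedAddCommGroup F] [NormedSpace ℝ F] (f : V → F) : IsOpen {x | ContDiffAt ℝ 1 f x} :=
  isOpen_iff_eventually.2 fun _ (hx : ContDiffAt ℝ 1 f _) => hx.eventually (by simp)

theorem continuousOn_fderiv_self {V F : Type*} [NormedAddCommGroup V] [NormedSpace ℝ V]
    [NormedAddCommGroup F] [NormedSpace ℝ F] {s : Set V} {f : V → F}
    (hf : ∀ x ∈ s, ContDiffAt ℝ 1 f x) : ContinuousOn (fun x => fderiv ℝ f x x) s := fun x hx =>
  (((hf x hx).fderiv_right (m := 0) (by simp)).continuousAt.clm_apply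
    continuousAt_id).continuousWithinAt

theorem hasDerivAt_integral_comp_flow {K V F : Type*} [TopologicalSpace K] [CompactSpace K]
    [SecondCountableTopology K] [MeasurableSpace K] [OpensMeasurableSpace K]
    (μ : Measure K) [IsFiniteMeasure μ] [NormedAddCommGroup V] [NormedSpace ℝ V]
    [NormedAddCommGroup F] [NormedSpace ℝ F] {γ γ' : ℝ → K → V}
    (hγc : Continuous (Function.uncurry γ)) (hγ'c : Continuous (Function.uncurry γ'))
    (hγ : ∀ s θ, HasDerivAt (γ · θ) (γ' s θ) s) {f : V → F} {t : ℝ}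
    (hf : ∀ θ, ContDiffAt ℝ 1 f (γ t θ)) :
    HasDerivAt (fun s => ∫ θ, f (γ s θ) ∂μ) (∫ θ, fderiv ℝ f (γ t θ) (γ' t θ) ∂μ) t := by
  have hf_near : ∀ᶠ s in 𝓝 t, ∀ θ ∈ Set.univ, ContDiffAt ℝ 1 f (γ s θ) := by
    refine isCompact_univ.eventually_forall_of_forall_eventually fun θ _ => ?_
    exact hγc.continuousAt.eventually ((isOpen_setOf_contDiffAt f).mem_nhds (hf θ))
  obtain ⟨δ, hδ, hδf⟩ := nhds_basis_closedBall.eventually_iff.1 hf_near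
  have hcont : ∀ s ∈ closedBall t δ, Continuous fun θ => f (γ s θ) := fun s hs =>
    continuous_iff_continuousAt.2 fun θ => (hδf hs θ trivial).continuousAt.comp
      (hγc.comp (Continuous.prodMk_right s)).continuousAt
  have hderiv : ContinuousOn (fun p : ℝ × K => fderiv ℝ f (γ p.1 p.2) (γ' p.1 p.2))
      (closedBall t δ ×ˢ Set.univ) := fun p hp => by
    have hfd : ContinuousAt (fderiv ℝ f) (Function.uncurry γ p) :=
      ((hδf hp.1 p.2 trivial).fderiv_right (m := 0) (by simp)).continuousAt
    exact ((hfd.comp hγc.continuousAt).clm_apply hγ'c.continuousAt).continuousWithinAt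
  obtain ⟨M, hM⟩ := ((isCompact_closedBall t δ).prod isCompact_univ).bddAbove_image hderiv.norm
  have hδt : t ∈ closedBall t δ := mem_closedBall_self hδ.le
  refine (hasDerivAt_integral_of_dominated_loc_of_deriv_le
    (F' := fun s θ => fderiv ℝ f (γ s θ) (γ' s θ)) (bound := fun _ => M)
    (closedBall_mem_nhds t hδ) ?_ ?_ ?_ ?_ (integrable_const M) ?_).2
  · filter_upwards [closedBall_mem_nhds t hδ] with s hs using (hcont s hs).aestronglyMeasurable
  · exact (hcont t hδt).integrable_of_hasCompactSupport (.of_compactSpace _)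
  · exact (hderiv.comp_continuous (Continuous.prodMk_right t)
      fun θ => ⟨hδt, trivial⟩).aestronglyMeasurable
  · exact .of_forall fun θ s hs => hM ⟨(s, θ), ⟨hs, trivial⟩, rfl⟩
  · exact .of_forall fun θ s hs =>
      ((hδf hs θ trivial).differentiableAt one_ne_zero).hasFDerivAt.comp_hasDerivAt s (hγ s θ)

theorem smul_mem_sphere {V : Type*} [NormedAddCommGroup V] [NormedSpace ℝ V] {r : ℝ} (hr : 0 ≤ r)
    (θ : sphere (0 : V) 1) : r • (θ : V) ∈ sphere (0 : V) r := by
  rw [mem_sphere_zero_iff_norm, norm_smul, Real.norm_of_nonneg hr, norm_eq_of_mem_sphere, mul_one]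

theorem exists_linearIsometryEquiv_eq_exp {V : Type*} [NormedAddCommGroup V]
    [InnerProductSpace ℝ V] [CompleteSpace V] {A : V →L[ℝ] V} (hA : A ∈ skewAdjoint (V →L[ℝ] V)) :
    ∃ e : V ≃ₗᵢ[ℝ] V, ∀ x, e x = NormedSpace.exp A x := by
  let _ : NormedAlgebra ℚ (V →L[ℝ] V) := NormedAlgebra.restrictScalars ℚ ℝ (V →L[ℝ] V)
  exact ⟨Unitary.linearIsometryEquiv ⟨_, NormedSpace.exp_mem_unitary_of_mem_skewAdjoint hA⟩,
    fun _ => rfl⟩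

variable {V : Type*} [NormedAddCommGroup V] [InnerProductSpace ℝ V] [MeasurableSpace V]
  [FiniteDimensional ℝ V] [BorelSpace V]

theorem integrable_comp_smul_sphere {F : Type*} [NormedAddCommGroup F] {r : ℝ} (hr : 0 ≤ r)
    {f : V → F} (hf : ContinuousOn f (sphere 0 r)) :
    Integrable (fun θ : sphere (0 : V) 1 => f (r • (θ : V))) (volume : Measure V).toSphere :=
  (hf.comp_continuous (by fun_prop) (smul_mem_sphere hr)).integrable_of_hasCompactSupport
    (.of_compactSpace _)

variable {F : Type*} [NormedAddCommGroup F] [NormedSpace ℝ F]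

/-- The integral of `f` over the sphere of radius `r` centred at the origin with respect to the
solid angle, i.e. without the factor `r ^ (dim V - 1)` of the surface measure. -/
def sphereIntegral (r : ℝ) (f : V → F) : F :=
  ∫ θ : sphere (0 : V) 1, f (r • (θ : V)) ∂(volume : Measure V).toSphere

theorem sphereIntegral_congr {r : ℝ} (hr : 0 ≤ r) {f g : V → F} (h : Set.EqOn f g (sphere 0 r)) :
    sphereIntegral r f = sphereIntegral r g :=
  integral_congr_ae (.of_forall fun θ => h (smul_mem_sphere hr θ))

theorem sphereIntegral_const [CompleteSpace F] (r : ℝ) (c : F) :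
    sphereIntegral r (fun _ : V => c) = (volume : Measure V).toSphere.real Set.univ • c :=
  integral_const c

theorem sphereIntegral_const_smul {𝕜 : Type*} [NormedDivisionRing 𝕜] [Module 𝕜 F]
    [NormSMulClass 𝕜 F] [SMulCommClass ℝ 𝕜 F] (c : 𝕜) (r : ℝ) (f : V → F) :
    sphereIntegral r (fun x => c • f x) = c • sphereIntegral r f :=
  integral_smul c _

theorem sphereIntegral_add {r : ℝ} (hr : 0 ≤ r) {f g : V → F}
    (hf : ContinuousOn f (sphere 0 r)) (hg : ContinuousOn g (sphere 0 r)) :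
    sphereIntegral r (fun x => f x + g x) = sphereIntegral r f + sphereIntegral r g :=
  integral_add (integrable_comp_smul_sphere hr hf) (integrable_comp_smul_sphere hr hg)

theorem sphereIntegral_sub {r : ℝ} (hr : 0 ≤ r) {f g : V → F}
    (hf : ContinuousOn f (sphere 0 r)) (hg : ContinuousOn g (sphere 0 r)) :
    sphereIntegral r (fun x => f x - g x) = sphereIntegral r f - sphereIntegral r g :=
  integral_sub (integrable_comp_smul_sphere hr hf) (integrable_comp_smul_sphere hr hg)

theorem sphereIntegral_sum {ι : Type*} (s : Finset ι) {r : ℝ} (hr : 0 ≤ r) {f : ι → V → F}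
    (hf : ∀ i ∈ s, ContinuousOn (f i) (sphere 0 r)) :
    sphereIntegral r (fun x => ∑ i ∈ s, f i x) = ∑ i ∈ s, sphereIntegral r (f i) :=
  integral_finsetSum s fun i hi => integrable_comp_smul_sphere hr (hf i hi)

theorem sphereIntegral_clm_comp {G : Type*} [NormedAddCommGroup G] [NormedSpace ℝ G]
    [CompleteSpace F] [CompleteSpace G] (L : F →L[ℝ] G) {r : ℝ} (hr : 0 ≤ r)
    {f : V → F} (hf : ContinuousOn f (sphere 0 r)) :
    sphereIntegral r (fun x => L (f x)) = L (sphereIntegral r f) :=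
  L.integral_comp_comm (integrable_comp_smul_sphere hr hf)

theorem re_sphereIntegral {r : ℝ} (hr : 0 ≤ r) {f : V → ℂ} (hf : ContinuousOn f (sphere 0 r)) :
    (sphereIntegral r f).re = sphereIntegral r fun x => (f x).re :=
  (sphereIntegral_clm_comp reCLM hr hf).symm

theorem im_sphereIntegral {r : ℝ} (hr : 0 ≤ r) {f : V → ℂ} (hf : ContinuousOn f (sphere 0 r)) :
    (sphereIntegral r f).im = sphereIntegral r fun x => (f x).im :=
  (sphereIntegral_clm_comp imCLM hr hf).symm

theorem sphereIntegral_nonpos {r : ℝ} (hr : 0 ≤ r) {f : V → ℝ} (hf : ∀ x ∈ sphere 0 r, f x ≤ 0) :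
    sphereIntegral r f ≤ 0 :=
  integral_nonpos fun θ => hf _ (smul_mem_sphere hr θ)

theorem sphereIntegral_nonneg {r : ℝ} (hr : 0 ≤ r) {f : V → ℝ} (hf : ∀ x ∈ sphere 0 r, 0 ≤ f x) :
    0 ≤ sphereIntegral r f :=
  integral_nonneg fun θ => hf _ (smul_mem_sphere hr θ)

theorem sphereIntegral_mono {r : ℝ} (hr : 0 ≤ r) {f g : V → ℝ}
    (hf : ContinuousOn f (sphere 0 r)) (hg : ContinuousOn g (sphere 0 r))
    (h : ∀ x ∈ sphere 0 r, f x ≤ g x) : sphereIntegral r f ≤ sphereIntegral r g :=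
  integral_mono (integrable_comp_smul_sphere hr hf) (integrable_comp_smul_sphere hr hg)
    fun θ => h _ (smul_mem_sphere hr θ)

theorem norm_sphereIntegral_sq_le [CompleteSpace F] [Nontrivial V] {r : ℝ} (hr : 0 ≤ r) {f : V → F}
    (hf : ContinuousOn f (sphere 0 r)) :
    ‖sphereIntegral r f‖ ^ 2 ≤
      (volume : Measure V).toSphere.real Set.univ * sphereIntegral r (fun x => ‖f x‖ ^ 2) := by
  set σ := (volume : Measure V).toSphere.real Set.univ with hσ_def
  have : NeZero (volume : Measure V).toSphere := ⟨Measure.toSphere_ne_zero _⟩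
  have hσ : 0 < σ := measureReal_univ_pos
  have hjensen : ‖σ⁻¹ • sphereIntegral r f‖ ^ 2 ≤ σ⁻¹ • sphereIntegral r (fun x => ‖f x‖ ^ 2) := by
    have hconv : ConvexOn ℝ Set.univ fun y : F => ‖y‖ ^ 2 :=
      convexOn_univ_norm.pow (fun _ _ => norm_nonneg _) 2
    simpa only [average_eq, sphereIntegral, hσ_def] using
      hconv.map_average_le (by fun_prop) isClosed_univ (by simp)
        (integrable_comp_smul_sphere hr hf) (integrable_comp_smul_sphere hr (hf.norm.pow 2))
  rw [norm_smul, mul_pow, Real.norm_of_nonneg (by positivity), smul_eq_mul] at hjensen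
  calc ‖sphereIntegral r f‖ ^ 2 = σ ^ 2 * (σ⁻¹ ^ 2 * ‖sphereIntegral r f‖ ^ 2) := by field_simp
    _ ≤ σ ^ 2 * (σ⁻¹ * sphereIntegral r (fun x => ‖f x‖ ^ 2)) := by gcongr
    _ = σ * sphereIntegral r (fun x => ‖f x‖ ^ 2) := by field_simp

theorem continuousOn_sphereIntegral {J : Set ℝ} (hJ : ∀ r ∈ J, 0 ≤ r) {f : V → F}
    (hf : ContinuousOn f (norm ⁻¹' J)) : ContinuousOn (fun r => sphereIntegral r f) J := by
  refine continuousOn_integral_of_compact_support (k := Set.univ) isCompact_univ ?_ (by simp)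
  refine hf.comp (by fun_prop) ?_
  rintro ⟨r, θ⟩ ⟨hr, -⟩
  rwa [Set.mem_preimage, mem_sphere_zero_iff_norm.1 (smul_mem_sphere (hJ r hr) θ)]

theorem hasDerivAt_sphereIntegral {r : ℝ} (hr : 0 < r) {f : V → F}
    (hf : ∀ x ∈ sphere 0 r, ContDiffAt ℝ 1 f x) :
    HasDerivAt (fun s => sphereIntegral s f) (r⁻¹ • sphereIntegral r fun x => fderiv ℝ f x x)
      r := by
  have hflow := hasDerivAt_integral_comp_flow (volume : Measure V).toSphere
    (γ := fun s θ => s • (θ : V)) (γ' := fun _ θ => (θ : V)) (by fun_prop) (by fun_prop)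
    (fun s θ => by simpa using (hasDerivAt_id s).smul_const (θ : V))
    (fun θ => hf _ (smul_mem_sphere hr.le θ))
  rw [← sphereIntegral_const_smul]
  simpa [sphereIntegral, hr.ne'] using hflow

/-- The homeomorphism of the unit sphere induced by a linear isometry. -/
def unitSphereHomeomorph (e : V ≃ₗᵢ[ℝ] V) : sphere (0 : V) 1 ≃ₜ sphere (0 : V) 1 :=
  e.toHomeomorph.subtype fun x => by simp

open scoped Pointwise in
theorem measurePreserving_unitSphereHomeomorph (e : V ≃ₗᵢ[ℝ] V) :
    MeasurePreserving (unitSphereHomeomorph e) (volume : Measure V).toSphere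
      (volume : Measure V).toSphere := by
  have hmeas := (unitSphereHomeomorph e).continuous.measurable
  refine ⟨hmeas, Measure.ext fun s hs => ?_⟩
  rw [Measure.map_apply hmeas hs, Measure.toSphere_apply' _ (hmeas hs),
    Measure.toSphere_apply' _ hs]
  have hcone : Set.Ioo (0 : ℝ) 1 • (Subtype.val '' (unitSphereHomeomorph e ⁻¹' s))
      = e.toMeasurableEquiv ⁻¹' (Set.Ioo (0 : ℝ) 1 • (Subtype.val '' s)) := by
    ext x
    simp only [Set.mem_smul, Set.mem_image, Set.mem_preimage]
    constructor
    · rintro ⟨t, ht, _, ⟨θ, hθ, rfl⟩, rfl⟩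
      exact ⟨t, ht, _, ⟨_, hθ, rfl⟩, (map_smul e t (θ : V)).symm⟩
    · rintro ⟨t, ht, _, ⟨θ, hθ, rfl⟩, h⟩
      refine ⟨t, ht, _, ⟨(unitSphereHomeomorph e).symm θ, by simpa using hθ, rfl⟩, e.injective ?_⟩
      rw [map_smul]
      exact (congrArg (t • ·) (e.apply_symm_apply (θ : V))).trans h
  rw [hcone, e.measurePreserving.measure_preimage_equiv]

theorem sphereIntegral_comp_linearIsometryEquiv (e : V ≃ₗᵢ[ℝ] V) (r : ℝ) (f : V → F) :
    sphereIntegral r (fun x => f (e x)) = sphereIntegral r f := by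
  rw [sphereIntegral, sphereIntegral, ← (measurePreserving_unitSphereHomeomorph e).integral_comp
    (unitSphereHomeomorph e).measurableEmbedding (fun θ => f (r • (θ : V)))]
  exact integral_congr_ae (.of_forall fun θ => congrArg f (map_smul e r (θ : V)))

-- The flow `exp (t A)` consists of isometries, so the spherical integral is constant along it.
theorem sphereIntegral_fderiv_skewAdjoint {r : ℝ} (hr : 0 ≤ r) {f : V → F}
    (hf : ∀ x ∈ sphere 0 r, ContDiffAt ℝ 1 f x) {A : V →L[ℝ] V}
    (hA : A ∈ skewAdjoint (V →L[ℝ] V)) :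
    sphereIntegral r (fun x => fderiv ℝ f x (A x)) = 0 := by
  have hexp : ∀ t : ℝ, HasDerivAt (fun t : ℝ => NormedSpace.exp (t • A))
      (A * NormedSpace.exp (t • A)) t := hasDerivAt_exp_smul_const' A
  have hexp_cont : Continuous fun p : ℝ × sphere (0 : V) 1 =>
      NormedSpace.exp (p.1 • A) (r • (p.2 : V)) :=
    ((continuous_iff_continuousAt.2 fun t => (hexp t).continuousAt).comp continuous_fst).clm_apply
      (by fun_prop)
  have hexp_zero : NormedSpace.exp ((0 : ℝ) • A) = 1 :=
    (congrArg NormedSpace.exp (zero_smul ℝ A)).trans NormedSpace.exp_zero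
  have hexp_zero_apply (x : V) : NormedSpace.exp ((0 : ℝ) • A) x = x := by rw [hexp_zero]; rfl
  have hconst (t : ℝ) : sphereIntegral r (fun x => f (NormedSpace.exp (t • A) x))
      = sphereIntegral r f := by
    obtain ⟨e, he⟩ := exists_linearIsometryEquiv_eq_exp (skewAdjoint.smul_mem t hA)
    simpa only [he] using sphereIntegral_comp_linearIsometryEquiv e r f
  have hflow := hasDerivAt_integral_comp_flow (volume : Measure V).toSphere
    (γ := fun t (θ : sphere (0 : V) 1) => NormedSpace.exp (t • A) (r • (θ : V)))
    (γ' := fun t θ => A (NormedSpace.exp (t • A) (r • (θ : V)))) (f := f) (t := 0)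
    hexp_cont (A.continuous.comp hexp_cont)
    (fun t θ => by simpa using (hexp t).clm_apply (hasDerivAt_const t (r • (θ : V))))
    (fun θ => by simpa only [hexp_zero_apply] using hf _ (smul_mem_sphere hr θ))
  rw [show (fun t : ℝ => ∫ θ : sphere (0 : V) 1, f (NormedSpace.exp (t • A) (r • (θ : V)))
    ∂(volume : Measure V).toSphere) = fun _ => sphereIntegral r f from funext hconst] at hflow
  simpa only [hexp_zero_apply, sphereIntegral] using hflow.unique (hasDerivAt_const _ _)

theorem eq_zero_of_forall_integral_smul_eq_zero {K F : Type*} [TopologicalSpace K] [CompactSpace K]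
    [MeasurableSpace K] [OpensMeasurableSpace K]
    {μ : Measure K} [IsFiniteMeasure μ] [μ.IsOpenPosMeasure] [NormedAddCommGroup F]
    [NormedSpace ℝ F] [CompleteSpace F] {A : Subalgebra ℝ C(K, ℝ)} (hA : A.SeparatesPoints)
    {f : K → F} (hf : Continuous f) (h : ∀ p ∈ A, ∫ θ, p θ • f θ ∂μ = 0) : f = 0 := by
  have hdense (p : C(K, ℝ)) : ∫ θ, p θ • f θ ∂μ = 0 := by
    have hclosed : IsClosed {p : C(K, ℝ) | ∫ θ, p θ • f θ ∂μ = 0} := by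
      refine isClosed_eq (continuousOn_univ.1 ?_) continuous_const
      exact continuousOn_integral_of_compact_support isCompact_univ
        (by fun_prop) (by simp)
    have hp : p ∈ A.topologicalClosure :=
      ContinuousMap.subalgebra_topologicalClosure_eq_top_of_separatesPoints A hA ▸ Algebra.mem_top
    exact closure_minimal h hclosed hp
  funext θ
  refine SeparatingDual.eq_zero_of_forall_dual_eq_zero (R := ℝ) fun L => ?_
  have hL : Continuous fun θ => L (f θ) := L.continuous.comp hf
  have hsq : ∫ θ, L (f θ) * L (f θ) ∂μ = 0 := calc
    _ = ∫ θ, L (L (f θ) • f θ) ∂μ := by simp only [map_smul, smul_eq_mul]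
    _ = L (∫ θ, L (f θ) • f θ ∂μ) := L.integral_comp_comm
      ((hL.smul hf).integrable_of_hasCompactSupport (.of_compactSpace _))
    _ = 0 := (congrArg L (hdense ⟨fun θ => L (f θ), hL⟩)).trans (map_zero L)
  have hzero := (integral_eq_zero_iff_of_nonneg (fun _ => mul_self_nonneg _)
    ((hL.mul hL).integrable_of_hasCompactSupport (.of_compactSpace _))).1 hsq
  exact mul_self_eq_zero.1 (congrFun (((hL.mul hL).ae_eq_iff_eq μ continuous_const).1 hzero) θ)

end SphereIntegral

section Polynomials

open Metric

theorem aeval_smul_of_isHomogeneous {ι R S : Type*} [CommSemiring R] [CommSemiring S] [Algebra R S]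
    {P : MvPolynomial ι R} {n : ℕ} (hP : P.IsHomogeneous n) (c : S) (x : ι → S) :
    MvPolynomial.aeval (c • x) P = c ^ n * MvPolynomial.aeval x P := by
  rw [MvPolynomial.aeval_def, MvPolynomial.aeval_def, MvPolynomial.eval₂_eq,
    MvPolynomial.eval₂_eq, Finset.mul_sum]
  refine Finset.sum_congr rfl fun d hd => ?_
  simp only [Pi.smul_apply, smul_eq_mul, mul_pow, Finset.prod_mul_distrib,
    Finset.prod_pow_eq_pow_sum, ← hP.degree_eq_sum_deg_support hd]
  ring

variable {ι : Type*}

/-- The position vector with complex entries. -/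
def posC (x : EuclideanSpace ℝ ι) : ι → ℂ := fun i => (x i : ℂ)

/-- The complex-valued function on Euclidean space given by a real polynomial. -/
def polyC (P : MvPolynomial ι ℝ) (x : EuclideanSpace ℝ ι) : ℂ := MvPolynomial.aeval (posC x) P

@[fun_prop]
theorem continuous_posC : Continuous (posC : EuclideanSpace ℝ ι → ι → ℂ) :=
  continuous_pi fun i => continuous_ofReal.comp (PiLp.continuous_apply 2 _ i)

variable [Fintype ι]

@[fun_prop]
theorem contDiff_posC {n : WithTop ℕ∞} : ContDiff ℝ n (posC : EuclideanSpace ℝ ι → ι → ℂ) :=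
  contDiff_pi.2 fun i => ofRealCLM.contDiff.comp (EuclideanSpace.proj (𝕜 := ℝ) i).contDiff

@[fun_prop]
theorem contDiff_polyC (P : MvPolynomial ι ℝ) {n : WithTop ℕ∞} : ContDiff ℝ n (polyC P) := by
  unfold polyC
  induction P using MvPolynomial.induction_on with
  | C c => simp only [MvPolynomial.aeval_C]; fun_prop
  | add P Q hP hQ => simp only [map_add]; fun_prop
  | mul_X P i hP => simp only [map_mul, MvPolynomial.aeval_X]; fun_prop

theorem posC_dotProduct_polyC_pderiv {P : MvPolynomial ι ℝ} {n : ℕ} (hP : P.IsHomogeneous n)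
    (x : EuclideanSpace ℝ ι) :
    posC x ⬝ᵥ (fun i => polyC (MvPolynomial.pderiv i P) x) = n * polyC P x := by
  simpa [polyC, dotProduct] using congrArg (MvPolynomial.aeval (posC x)) hP.sum_X_mul_pderiv

theorem exists_norm_polyC_le {P : MvPolynomial ι ℝ} {n : ℕ} (hP : P.IsHomogeneous n) :
    ∃ C : ℝ, ∀ x ≠ 0, ‖polyC P x‖ ≤ C * ‖x‖ ^ n := by
  obtain ⟨C, hC⟩ := (isCompact_sphere (0 : EuclideanSpace ℝ ι) 1).exists_bound_of_continuousOn
    (contDiff_polyC P (n := 0)).continuous.continuousOn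
  refine ⟨C, fun x hx => ?_⟩
  have hx_norm : ‖x‖ ≠ 0 := norm_ne_zero_iff.2 hx
  have hscale : posC x = (‖x‖ : ℂ) • posC (‖x‖⁻¹ • x) := by
    ext i
    simp [posC, hx_norm]
  calc ‖polyC P x‖ = ‖polyC P (‖x‖⁻¹ • x)‖ * ‖x‖ ^ n := by
        rw [polyC, hscale, aeval_smul_of_isHomogeneous hP, norm_mul, norm_pow, norm_real,
          norm_norm, mul_comm, polyC]
    _ ≤ C * ‖x‖ ^ n := by
        gcongr
        exact hC _ (by simp [norm_smul, hx_norm])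

theorem eqOn_zero_of_forall_sphereIntegral_polyC_mul_eq_zero {r : ℝ} (hr : 0 < r)
    {u : EuclideanSpace ℝ ι → ℂ} (hu : ContinuousOn u (sphere 0 r))
    (h : ∀ P, sphereIntegral r (fun x => polyC P x * u x) = 0) : Set.EqOn u 0 (sphere 0 r) := by
  let restr : MvPolynomial ι ℝ →ₐ[ℝ] C(sphere (0 : EuclideanSpace ℝ ι) 1, ℝ) :=
    MvPolynomial.aeval fun i => ⟨fun θ => r * (θ : EuclideanSpace ℝ ι) i, by fun_prop⟩
  have hrestr (P θ) : ((restr P θ : ℝ) : ℂ) = polyC P (r • (θ : EuclideanSpace ℝ ι)) := by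
    unfold polyC
    induction P using MvPolynomial.induction_on with
    | C c => simp [restr]
    | add P Q hP hQ => simp only [map_add, ContinuousMap.add_apply, ofReal_add, hP, hQ]
    | mul_X P i hP =>
      simp only [map_mul, ContinuousMap.mul_apply, ofReal_mul, hP]
      simp [restr, posC]
  have hsep : restr.range.SeparatesPoints := by
    intro θ₁ θ₂ hne
    by_contra! hcon
    refine hne (Subtype.ext (PiLp.ext fun i => ?_))
    simpa [restr, hr.ne'] using hcon _ ⟨restr (MvPolynomial.X i), ⟨MvPolynomial.X i, rfl⟩, rfl⟩
  have hzero := eq_zero_of_forall_integral_smul_eq_zero hsep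
    (μ := (volume : Measure (EuclideanSpace ℝ ι)).toSphere)
    (hu.comp_continuous (by fun_prop) (smul_mem_sphere hr.le)) (by
      rintro _ ⟨P, rfl⟩
      refine Eq.trans ?_ (h P)
      simp only [← hrestr, sphereIntegral, real_smul]
      rfl)
  intro x hx
  have hθ : r⁻¹ • x ∈ sphere (0 : EuclideanSpace ℝ ι) 1 := by
    rw [mem_sphere_zero_iff_norm] at hx
    simp [norm_smul, hx, hr.ne', abs_of_pos hr]
  simpa [smul_inv_smul₀ hr.ne'] using congrFun hzero ⟨r⁻¹ • x, hθ⟩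

end Polynomials

section VectorCalculus

open Matrix

/-- The complex gradient of a scalar function on space. -/
def gradC (φ : E3 → ℂ) (x : E3) : Fin 3 → ℂ := fun j => pdC φ j x

/-- The Jacobian matrix of a vector field: row `i` is the gradient of the `i`-th component. -/
def jacC (F : E3 → Fin 3 → ℂ) (x : E3) : Matrix (Fin 3) (Fin 3) ℂ :=
  .of fun i => gradC (fun y => F y i) x

/-- The divergence of a vector field. -/
def divC (F : E3 → Fin 3 → ℂ) (x : E3) : ℂ := (jacC F x).trace

variable {φ ψ : E3 → ℂ} {F G : E3 → Fin 3 → ℂ} {x : E3}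

theorem fderiv_eq_dotProduct_gradC (φ : E3 → ℂ) (x v : E3) :
    fderiv ℝ φ x v = posC v ⬝ᵥ gradC φ x := by
  conv_lhs => rw [← (EuclideanSpace.basisFun (Fin 3) ℝ).sum_repr v]
  simp [dotProduct, posC, gradC, pdC]

theorem fderiv_component (hF : DifferentiableAt ℝ F x) (i : Fin 3) (v : E3) :
    fderiv ℝ (fun y => F y i) x v = fderiv ℝ F x v i :=
  congrArg (· v) (hasFDerivAt_pi'.1 hF.hasFDerivAt i).fderiv

theorem fderiv_eq_jacC_mulVec (hF : DifferentiableAt ℝ F x) (v : E3) :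
    fderiv ℝ F x v = jacC F x *ᵥ posC v := by
  ext i
  rw [← fderiv_component hF, fderiv_eq_dotProduct_gradC, dotProduct_comm]
  rfl

theorem gradC_mul (hφ : DifferentiableAt ℝ φ x) (hψ : DifferentiableAt ℝ ψ x) :
    gradC (fun y => φ y * ψ y) x = φ x • gradC ψ x + ψ x • gradC φ x := by
  ext j
  simp [gradC, pdC, fderiv_fun_mul hφ hψ]

theorem gradC_add (hφ : DifferentiableAt ℝ φ x) (hψ : DifferentiableAt ℝ ψ x) :
    gradC (fun y => φ y + ψ y) x = gradC φ x + gradC ψ x := by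
  ext j
  simp [gradC, pdC, fderiv_fun_add hφ hψ]

theorem gradC_sub (hφ : DifferentiableAt ℝ φ x) (hψ : DifferentiableAt ℝ ψ x) :
    gradC (fun y => φ y - ψ y) x = gradC φ x - gradC ψ x := by
  ext j
  simp [gradC, pdC, fderiv_fun_sub hφ hψ]

theorem divC_add (hF : DifferentiableAt ℝ F x) (hG : DifferentiableAt ℝ G x) :
    divC (fun y => F y + G y) x = divC F x + divC G x := by
  rw [divC, divC, divC, ← trace_add]
  congr 1
  ext i j
  exact congrFun (gradC_add (differentiableAt_pi.1 hF i) (differentiableAt_pi.1 hG i)) j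

theorem divC_sub (hF : DifferentiableAt ℝ F x) (hG : DifferentiableAt ℝ G x) :
    divC (fun y => F y - G y) x = divC F x - divC G x := by
  rw [divC, divC, divC, ← trace_sub]
  congr 1
  ext i j
  exact congrFun (gradC_sub (differentiableAt_pi.1 hF i) (differentiableAt_pi.1 hG i)) j

theorem jacC_smul (hφ : DifferentiableAt ℝ φ x) (hF : DifferentiableAt ℝ F x) :
    jacC (fun y => φ y • F y) x = φ x • jacC F x + vecMulVec (F x) (gradC φ x) := by
  ext i j
  exact congrFun (gradC_mul hφ (differentiableAt_pi.1 hF i)) j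

theorem jacC_star (F : E3 → Fin 3 → ℂ) (x : E3) :
    jacC (fun y => star (F y)) x = (jacC F x).map star := by
  ext i j
  exact congrArg (· (EuclideanSpace.single j 1))
    (fderiv_star (𝕜 := ℝ) (f := fun y => F y i) (x := x))

theorem differentiable_posC : Differentiable ℝ (posC : E3 → Fin 3 → ℂ) :=
  (contDiff_posC (n := 1)).differentiable one_ne_zero

theorem jacC_posC (x : E3) : jacC posC x = 1 := by
  ext i j
  have hi : fderiv ℝ (fun y : E3 => (y i : ℂ)) x = ofRealCLM ∘L EuclideanSpace.proj i :=
    (ofRealCLM ∘L EuclideanSpace.proj (𝕜 := ℝ) i : E3 →L[ℝ] ℂ).fderiv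
  change fderiv ℝ (fun y : E3 => (y i : ℂ)) x (EuclideanSpace.single j 1) = _
  simp [hi, one_apply, apply_ite]

theorem jacC_const (v : Fin 3 → ℂ) (x : E3) : jacC (fun _ => v) x = 0 := by
  ext i j
  simp [jacC, gradC, pdC]

theorem jacC_crossC_apply (hF : DifferentiableAt ℝ F x) (hG : DifferentiableAt ℝ G x)
    (i j : Fin 3) : jacC (fun y => crossC (F y) (G y)) x i j =
      (crossC ((jacC F x).col j) (G x) + crossC (F x) ((jacC G x).col j)) i := by
  have hF' := differentiableAt_pi.1 hF
  have hG' := differentiableAt_pi.1 hG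
  fin_cases i
  all_goals
    refine (congrFun (gradC_sub ((hF' _).fun_mul (hG' _)) ((hF' _).fun_mul (hG' _))) j).trans ?_
    simp only [gradC_mul (hF' _) (hG' _)]
    simp [jacC, crossC]
    ring

theorem gradC_dotProduct (hF : DifferentiableAt ℝ F x) (hG : DifferentiableAt ℝ G x) :
    gradC (fun y => F y ⬝ᵥ G y) x = F x ᵥ* jacC G x + G x ᵥ* jacC F x := by
  have hF' := differentiableAt_pi.1 hF
  have hG' := differentiableAt_pi.1 hG
  ext j
  simp only [gradC, pdC, dotProduct]
  rw [fderiv_fun_sum fun i _ => (hF' i).fun_mul (hG' i)]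
  simp [fderiv_fun_mul (hF' _) (hG' _), vecMul, dotProduct, jacC, gradC, pdC,
    Finset.sum_add_distrib]

theorem divC_crossC (hF : DifferentiableAt ℝ F x) (hG : DifferentiableAt ℝ G x) :
    divC (fun y => crossC (F y) (G y)) x = G x ⬝ᵥ curlC F x - F x ⬝ᵥ curlC G x := by
  simp only [divC, trace, diag, jacC_crossC_apply hF hG, Fin.sum_univ_three, dotProduct]
  simp [curlC, crossC, jacC, gradC]
  ring

theorem curlC_crossC (hF : DifferentiableAt ℝ F x) (hG : DifferentiableAt ℝ G x) :
    curlC (fun y => crossC (F y) (G y)) x =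
      divC G x • F x - divC F x • G x + jacC F x *ᵥ G x - jacC G x *ᵥ F x := by
  have hj (i j : Fin 3) : pdC (fun y => crossC (F y) (G y) i) j x = _ :=
    jacC_crossC_apply hF hG i j
  ext i
  fin_cases i
  all_goals
    simp only [curlC, hj]
    simp [crossC, divC, trace, mulVec, dotProduct, Fin.sum_univ_three]
    ring

theorem crossC_curlC (v : Fin 3 → ℂ) (F : E3 → Fin 3 → ℂ) (x : E3) :
    crossC v (curlC F x) = v ᵥ* jacC F x - jacC F x *ᵥ v := by
  ext i
  fin_cases i
  all_goals
    simp [crossC, curlC, jacC, gradC, vecMul, mulVec, dotProduct, Fin.sum_univ_three]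
    ring

theorem divC_smul (hφ : DifferentiableAt ℝ φ x) (hF : DifferentiableAt ℝ F x) :
    divC (fun y => φ y • F y) x = φ x * divC F x + gradC φ x ⬝ᵥ F x := by
  simp [divC, jacC_smul hφ hF, dotProduct_comm]

theorem curlC_smul (hφ : DifferentiableAt ℝ φ x) (hF : DifferentiableAt ℝ F x) :
    curlC (fun y => φ y • F y) x = φ x • curlC F x + crossC (gradC φ x) (F x) := by
  have hj (i j : Fin 3) : pdC (fun y => (φ y • F y) i) j x = _ :=
    congrFun (congrFun (jacC_smul hφ hF) i) j
  ext i
  fin_cases i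
  all_goals
    simp only [curlC, hj]
    simp [crossC, jacC, gradC, vecMulVec]
    ring

@[fun_prop]
theorem contDiff_crossC {n : WithTop ℕ∞} :
    ContDiff ℝ n fun p : (Fin 3 → ℂ) × (Fin 3 → ℂ) => crossC p.1 p.2 := by
  refine contDiff_pi.2 fun i => ?_
  fin_cases i
  all_goals
    simp only [crossC, Fin.zero_eta, Fin.mk_one, Fin.reduceFinMk, cons_val]
    fun_prop

@[fun_prop]
theorem continuous_crossC : Continuous fun p : (Fin 3 → ℂ) × (Fin 3 → ℂ) => crossC p.1 p.2 :=
  (contDiff_crossC (n := 0)).continuous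

@[fun_prop]
theorem differentiable_crossC :
    Differentiable ℝ fun p : (Fin 3 → ℂ) × (Fin 3 → ℂ) => crossC p.1 p.2 :=
  (contDiff_crossC (n := 1)).differentiable one_ne_zero

@[fun_prop]
theorem contDiff_star {n : WithTop ℕ∞} : ContDiff ℝ n (star : (Fin 3 → ℂ) → Fin 3 → ℂ) :=
  (starL' ℝ).contDiff

@[fun_prop]
theorem contDiff_dotProduct {ι : Type*} [Fintype ι] {n : WithTop ℕ∞} :
    ContDiff ℝ n fun p : (ι → ℂ) × (ι → ℂ) => p.1 ⬝ᵥ p.2 := by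
  unfold dotProduct
  fun_prop

@[fun_prop]
theorem continuous_dotProduct {ι : Type*} [Fintype ι] :
    Continuous fun p : (ι → ℂ) × (ι → ℂ) => p.1 ⬝ᵥ p.2 :=
  (contDiff_dotProduct (n := 0)).continuous

@[fun_prop]
theorem differentiable_dotProduct {ι : Type*} [Fintype ι] :
    Differentiable ℝ fun p : (ι → ℂ) × (ι → ℂ) => p.1 ⬝ᵥ p.2 :=
  (contDiff_dotProduct (n := 1)).differentiable one_ne_zero

theorem contDiffAt_pdC {m n : WithTop ℕ∞} (hφ : ContDiffAt ℝ n φ x) (hmn : m + 1 ≤ n) (j : Fin 3) :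
    ContDiffAt ℝ m (pdC φ j) x :=
  (hφ.fderiv_right hmn).clm_apply contDiffAt_const

theorem contDiffAt_gradC {m n : WithTop ℕ∞} (hφ : ContDiffAt ℝ n φ x) (hmn : m + 1 ≤ n) :
    ContDiffAt ℝ m (gradC φ) x :=
  contDiffAt_pi.2 (contDiffAt_pdC hφ hmn)

theorem continuousAt_jacC (hF : ContDiffAt ℝ 1 F x) : ContinuousAt (jacC F) x :=
  continuousAt_pi.2 fun i =>
    (contDiffAt_gradC (m := 0) (contDiffAt_pi.1 hF i) (by simp)).continuousAt

theorem continuousAt_divC (hF : ContDiffAt ℝ 1 F x) : ContinuousAt (divC F) x :=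
  continuous_id.matrix_trace.continuousAt.comp (continuousAt_jacC hF)

theorem continuousAt_curlC (hF : ContDiffAt ℝ 1 F x) : ContinuousAt (curlC F) x := by
  have hpd (i j : Fin 3) : ContinuousAt (pdC (fun y => F y i) j) x :=
    (contDiffAt_pdC (m := 0) (contDiffAt_pi.1 hF i) (by simp) j).continuousAt
  refine continuousAt_pi.2 fun i => ?_
  fin_cases i
  exacts [(hpd 2 1).sub (hpd 1 2), (hpd 0 2).sub (hpd 2 0), (hpd 1 0).sub (hpd 0 1)]

open Metric Topology

theorem sphereIntegral_angularDeriv {r : ℝ} (hr : 0 ≤ r) (hφ : ∀ x ∈ sphere 0 r, ContDiffAt ℝ 1 φ x)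
    (i j : Fin 3) :
    sphereIntegral r (fun x : E3 => (x i : ℂ) * pdC φ j x - (x j : ℂ) * pdC φ i x) = 0 := by
  let proj (i : Fin 3) : E3 →L[ℝ] ℝ := EuclideanSpace.proj i
  let A : E3 →L[ℝ] E3 := (proj i).smulRight (EuclideanSpace.single j (1 : ℝ))
    - (proj j).smulRight (EuclideanSpace.single i (1 : ℝ))
  have hA : A ∈ skewAdjoint (E3 →L[ℝ] E3) := by
    rw [skewAdjoint.mem_iff, ContinuousLinearMap.star_eq_adjoint, eq_comm,
      ContinuousLinearMap.eq_adjoint_iff]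
    intro x y
    simp [A, proj, inner_sub_left, inner_sub_right, inner_smul_left, inner_smul_right,
      EuclideanSpace.inner_single_left, EuclideanSpace.inner_single_right]
    ring
  simpa [A, proj, pdC] using sphereIntegral_fderiv_skewAdjoint hr hφ hA

-- `x · curl G` only involves the angular derivatives `xᵢ ∂ⱼ - xⱼ ∂ᵢ` of the components of `G`.
theorem sphereIntegral_posC_dotProduct_curlC {r : ℝ} (hr : 0 ≤ r)
    (hG : ∀ x ∈ sphere 0 r, ContDiffAt ℝ 1 G x) :
    sphereIntegral r (fun x => posC x ⬝ᵥ curlC G x) = 0 := by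
  let rot (i j k : Fin 3) (x : E3) : ℂ :=
    (x i : ℂ) * pdC (fun y => G y k) j x - (x j : ℂ) * pdC (fun y => G y k) i x
  have hrot (i j k : Fin 3) : sphereIntegral r (rot i j k) = 0 :=
    sphereIntegral_angularDeriv hr (fun x hx => contDiffAt_pi.1 (hG x hx) k) i j
  have hcont (i j k : Fin 3) : ContinuousOn (rot i j k) (sphere 0 r) := fun x hx => by
    have hpd (l : Fin 3) : ContinuousAt (pdC (fun y => G y k) l) x :=
      (contDiffAt_pdC (m := 0) (contDiffAt_pi.1 (hG x hx) k) (by simp) l).continuousAt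
    exact ContinuousAt.continuousWithinAt (by fun_prop)
  calc sphereIntegral r (fun x => posC x ⬝ᵥ curlC G x)
      = sphereIntegral r (fun x => rot 1 2 0 x + rot 2 0 1 x + rot 0 1 2 x) := by
        congr 1 with x
        simp [rot, curlC, posC, dotProduct, Fin.sum_univ_three]
        ring
    _ = 0 := by
        rw [sphereIntegral_add hr ((hcont _ _ _).fun_add (hcont _ _ _)) (hcont _ _ _),
          sphereIntegral_add hr (hcont _ _ _) (hcont _ _ _), hrot, hrot, hrot, add_zero, add_zero]

/-- The flux `∫_{|x| = r} N · F dS` of a vector field through the sphere of radius `r`; the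
position vector equals `r N` there and the surface measure is `r ^ 2` times the solid angle. -/
def flux (F : E3 → Fin 3 → ℂ) (r : ℝ) : ℂ := r * sphereIntegral r fun x => posC x ⬝ᵥ F x

theorem flux_congr {r : ℝ} (hr : 0 ≤ r) (h : Set.EqOn F G (sphere 0 r)) : flux F r = flux G r := by
  rw [flux, flux, sphereIntegral_congr hr fun x hx => congrArg (posC x ⬝ᵥ ·) (h hx)]

theorem flux_curlC {r : ℝ} (hr : 0 ≤ r) (hG : ∀ x ∈ sphere 0 r, ContDiffAt ℝ 1 G x) :
    flux (curlC G) r = 0 := by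
  rw [flux, sphereIntegral_posC_dotProduct_curlC hr hG, mul_zero]

theorem flux_add {r : ℝ} (hr : 0 ≤ r) (hF : ContinuousOn F (sphere 0 r))
    (hG : ContinuousOn G (sphere 0 r)) : flux (fun x => F x + G x) r = flux F r + flux G r := by
  simp only [flux, dotProduct_add]
  rw [sphereIntegral_add hr (by fun_prop) (by fun_prop), mul_add]

theorem continuousOn_flux {J : Set ℝ} (hJ : ∀ r ∈ J, 0 ≤ r) (hF : ContinuousOn F (norm ⁻¹' J)) :
    ContinuousOn (flux F) J :=
  continuous_ofReal.continuousOn.mul (continuousOn_sphereIntegral hJ (by fun_prop))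

theorem posC_dotProduct_self (x : E3) : posC x ⬝ᵥ posC x = (‖x‖ : ℂ) ^ 2 := by
  rw [← ofReal_pow, EuclideanSpace.real_norm_sq_eq]
  simp [posC, dotProduct, sq]

theorem posC_dotProduct_curlC_crossC_posC (hF : DifferentiableAt ℝ F x) :
    posC x ⬝ᵥ curlC (fun y => crossC (posC y) (F y)) x =
      (‖x‖ : ℂ) ^ 2 * divC F x - 2 * (posC x ⬝ᵥ F x) - posC x ⬝ᵥ jacC F x *ᵥ posC x := by
  rw [curlC_crossC (differentiable_posC x) hF, divC, divC, jacC_posC]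
  simp only [dotProduct_add, dotProduct_sub, dotProduct_smul, one_mulVec, posC_dotProduct_self,
    trace_one, Fintype.card_fin, smul_eq_mul]
  push_cast
  ring

theorem fderiv_posC_dotProduct_self (hF : DifferentiableAt ℝ F x) :
    fderiv ℝ (fun y => posC y ⬝ᵥ F y) x x = posC x ⬝ᵥ F x + posC x ⬝ᵥ jacC F x *ᵥ posC x := by
  rw [fderiv_eq_dotProduct_gradC, gradC_dotProduct (differentiable_posC x) hF, jacC_posC,
    vecMul_one, dotProduct_add, dotProduct_comm _ (_ ᵥ* _), ← dotProduct_mulVec, add_comm]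

theorem hasDerivAt_flux {r : ℝ} (hr : 0 < r) (hF : ∀ x ∈ sphere 0 r, ContDiffAt ℝ 1 F x) :
    HasDerivAt (flux F) ((r : ℂ) ^ 2 * sphereIntegral r (divC F)) r := by
  let p (x : E3) : ℂ := posC x ⬝ᵥ F x
  have hp (x) (hx : x ∈ sphere 0 r) : ContDiffAt ℝ 1 p x := by have := hF x hx; fun_prop
  have hX (x) (hx : x ∈ sphere 0 r) : ContDiffAt ℝ 1 (fun y => crossC (posC y) (F y)) x := by
    have := hF x hx
    fun_prop
  have hpc : ContinuousOn p (sphere 0 r) := fun x hx => (hp x hx).continuousAt.continuousWithinAt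
  have hdpc : ContinuousOn (fun x => fderiv ℝ p x x) (sphere 0 r) :=
    continuousOn_fderiv_self hp
  have hXc : ContinuousOn (fun x => posC x ⬝ᵥ curlC (fun y => crossC (posC y) (F y)) x)
      (sphere 0 r) := fun x hx => by
    have := continuousAt_curlC (hX x hx)
    exact ContinuousAt.continuousWithinAt (by fun_prop)
  have hdiv : (r : ℂ) ^ 2 * sphereIntegral r (divC F) =
      sphereIntegral r p + sphereIntegral r fun x => fderiv ℝ p x x := calc
    _ = sphereIntegral r (fun x => p x + fderiv ℝ p x x
          + posC x ⬝ᵥ curlC (fun y => crossC (posC y) (F y)) x) := by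
      rw [← smul_eq_mul, ← sphereIntegral_const_smul]
      refine sphereIntegral_congr hr.le fun x hx => ?_
      have hFx := (hF x hx).differentiableAt one_ne_zero
      have hxr : ‖x‖ = r := mem_sphere_zero_iff_norm.1 hx
      simp only [p, smul_eq_mul, fderiv_posC_dotProduct_self hFx,
        posC_dotProduct_curlC_crossC_posC hFx, hxr]
      ring
    _ = _ := by
      rw [sphereIntegral_add hr.le (hpc.fun_add hdpc) hXc, sphereIntegral_add hr.le hpc hdpc,
        sphereIntegral_posC_dotProduct_curlC hr.le hX, add_zero]
  have hderiv := (hasDerivAt_id r).ofReal_comp.mul (hasDerivAt_sphereIntegral hr hp)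
  refine hderiv.congr_deriv ?_
  have hr' : (r : ℂ) ≠ 0 := ofReal_ne_zero.2 hr.ne'
  simp [hdiv, hr']

theorem curlC_comp_add_right (F : E3 → Fin 3 → ℂ) (c x : E3) :
    curlC (fun y => F (y + c)) x = curlC F (x + c) := by
  have hpd (i j : Fin 3) : pdC (fun y => F (y + c) i) j x = pdC (fun y => F y i) j (x + c) := by
    rw [pdC, fderiv_comp_add_right (f := fun y => F y i), pdC]
  simp only [curlC, hpd]

theorem divC_comp_add_right (F : E3 → Fin 3 → ℂ) (c x : E3) :
    divC (fun y => F (y + c)) x = divC F (x + c) := by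
  simp only [divC, trace, diag, jacC, of_apply, gradC, pdC]
  exact Finset.sum_congr rfl fun i _ => by rw [fderiv_comp_add_right (f := fun y => F y i)]

theorem divC_curlC_zero (hF : ContDiffAt ℝ 1 F 0) (hcurl : ContDiffAt ℝ 1 (curlC F) 0) :
    divC (curlC F) 0 = 0 := by
  obtain ⟨ε, hε, hball⟩ := eventually_nhds_iff_ball.1
    ((hF.eventually (by simp)).and (hcurl.eventually (by simp)))
  have hS (r : ℝ) (hr : r ∈ Set.Ioo 0 ε) : sphereIntegral r (divC (curlC F)) = 0 := by
    have hflux : flux (curlC F) =ᶠ[𝓝 r] fun _ => 0 := by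
      filter_upwards [Ioo_mem_nhds hr.1 hr.2] with s hs
      exact flux_curlC hs.1.le fun y hy => (hball y (by simp_all)).1
    have hderiv := hasDerivAt_flux hr.1 fun y hy => (hball y (by simp_all)).2
    simpa [hr.1.ne'] using hderiv.unique ((hasDerivAt_const r (0 : ℂ)).congr_of_eventuallyEq hflux)
  have hcont : ContinuousOn (fun r => sphereIntegral r (divC (curlC F))) (Set.Ico 0 ε) :=
    continuousOn_sphereIntegral (fun r hr => hr.1) fun y hy =>
      (continuousAt_divC (hball y (by simp_all)).2).continuousWithinAt
  have hS0 : sphereIntegral 0 (divC (curlC F)) = 0 :=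
    Set.EqOn.of_subset_closure (g := fun _ => (0 : ℂ)) hS hcont continuousOn_const
      Set.Ioo_subset_Ico_self (by rw [closure_Ioo hε.ne]; exact Set.Ico_subset_Icc_self)
      ⟨le_rfl, hε⟩
  rw [sphereIntegral_congr le_rfl (g := fun _ => divC (curlC F) 0) fun y hy => by
    rw [norm_eq_zero.1 (mem_sphere_zero_iff_norm.1 hy)], sphereIntegral_const] at hS0
  have hvol : (volume : Measure E3).toSphere.real Set.univ ≠ 0 := by
    have : NeZero (volume : Measure E3).toSphere := ⟨Measure.toSphere_ne_zero _⟩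
    exact measureReal_univ_ne_zero
  exact (smul_eq_zero.1 hS0).resolve_left hvol

-- Only one derivative of `curl F` is assumed, so this is not a matter of commuting second
-- derivatives: `curl F` has no flux through any small sphere around `x`.
theorem divC_curlC (hF : ContDiffAt ℝ 1 F x) (hcurl : ContDiffAt ℝ 1 (curlC F) x) :
    divC (curlC F) x = 0 := by
  have htrans : curlC (fun y => F (y + x)) = fun y => curlC F (y + x) :=
    funext (curlC_comp_add_right F x)
  have hadd : ContDiffAt ℝ 1 (fun y => y + x) (0 : E3) := by fun_prop
  have hzero : divC (curlC fun y => F (y + x)) 0 = 0 := by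
    refine divC_curlC_zero (ContDiffAt.comp 0 (by rwa [zero_add]) hadd) ?_
    rw [htrans]
    exact ContDiffAt.comp 0 (by rwa [zero_add]) hadd
  rwa [htrans, divC_comp_add_right, zero_add] at hzero

theorem star_crossC (A B : Fin 3 → ℂ) : star (crossC A B) = crossC (star A) (star B) := by
  ext i
  fin_cases i <;> simp [crossC]

theorem crossC_smul (c : ℂ) (A B : Fin 3 → ℂ) : crossC A (c • B) = c • crossC A B := by
  ext i
  fin_cases i <;> simp [crossC] <;> ring

theorem curlC_star (F : E3 → Fin 3 → ℂ) (x : E3) :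
    curlC (fun y => star (F y)) x = star (curlC F x) := by
  have hj (i j : Fin 3) : pdC (fun y => star (F y) i) j x = _ :=
    congrFun (congrFun (jacC_star F x) i) j
  ext i
  fin_cases i <;> simp only [curlC, hj] <;> simp [jacC, gradC]

theorem divC_star (F : E3 → Fin 3 → ℂ) (x : E3) :
    divC (fun y => star (F y)) x = star (divC F x) := by
  simp [divC, jacC_star, trace]

theorem dotProduct_star_self (v : Fin 3 → ℂ) : v ⬝ᵥ star v = (∑ j, ‖v j‖ ^ 2 : ℝ) := by
  simp [dotProduct, mul_conj']

theorem divC_congr (h : F =ᶠ[𝓝 x] G) : divC F x = divC G x := by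
  have hi (i : Fin 3) : (fun y => F y i) =ᶠ[𝓝 x] fun y => G y i := h.fun_comp (· i)
  simp only [divC, trace, diag, jacC, of_apply, gradC, pdC, (hi _).fderiv_eq]

theorem curlC_congr (h : F =ᶠ[𝓝 x] G) : curlC F x = curlC G x := by
  have hi (i : Fin 3) : (fun y => F y i) =ᶠ[𝓝 x] fun y => G y i := h.fun_comp (· i)
  simp only [curlC, pdC, (hi _).fderiv_eq]

theorem divC_const_smul (c : ℂ) (hF : DifferentiableAt ℝ F x) :
    divC (fun y => c • F y) x = c * divC F x := by
  have hc : gradC (fun _ => c) x = 0 := by ext j; simp [gradC, pdC]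
  rw [divC_smul (differentiableAt_const c) hF, hc, zero_dotProduct, add_zero]

theorem posC_smul (c : ℝ) (x : E3) : posC (c • x) = (c : ℂ) • posC x := by
  ext j
  simp [posC]

theorem crossC_crossC_dotProduct_crossC (n A B : Fin 3 → ℂ) :
    crossC n (crossC A n) ⬝ᵥ crossC n B = -(n ⬝ᵥ n * (n ⬝ᵥ crossC A B)) := by
  simp [crossC, dotProduct, Fin.sum_univ_three]
  ring

theorem re_dotProduct_crossC_star_nonpos_of_impedance {A B : Fin 3 → ℂ} {ζ : ℂ} (hζ : 0 ≤ ζ.re)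
    (hx : ‖x‖ = 1) (h : crossC (posC x) (crossC A (posC x)) = ζ • crossC (posC x) B) :
    (posC x ⬝ᵥ crossC A (star B)).re ≤ 0 := by
  have hreal : star (posC x) = posC x := by ext; simp [posC]
  have hflux : posC x ⬝ᵥ crossC A (star B) =
      -(ζ * (crossC (posC x) B ⬝ᵥ star (crossC (posC x) B))) := by
    have hlagrange := crossC_crossC_dotProduct_crossC (posC x) A (star B)
    rw [posC_dotProduct_self, hx, h, smul_dotProduct] at hlagrange
    rw [star_crossC, hreal, ← smul_eq_mul, hlagrange]
    simp
  rw [hflux, dotProduct_star_self, neg_re, re_mul_ofReal, neg_nonpos]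
  positivity

theorem im_star_dotProduct_fderiv_self_of_divC_eq_zero (hF : DifferentiableAt ℝ F x)
    (hdiv : divC F x = 0) :
    (star (F x) ⬝ᵥ fderiv ℝ F x x).im = (posC x ⬝ᵥ crossC (star (F x)) (curlC F x)).im
      + (posC x ⬝ᵥ curlC (fun y => crossC (F y) (star (F y))) x).im / 2 := by
  have hcurl := curlC_crossC hF hF.star
  rw [divC_star, hdiv, star_zero, zero_smul, zero_smul, sub_zero, zero_add, jacC_star] at hcurl
  have hconj : posC x ⬝ᵥ (jacC F x).map star *ᵥ F x = star (posC x ⬝ᵥ jacC F x *ᵥ star (F x)) := by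
    simp [dotProduct, mulVec, posC]
  rw [fderiv_eq_jacC_mulVec hF, crossC_curlC, hcurl, dotProduct_sub, dotProduct_sub, hconj,
    dotProduct_comm (posC x) (_ ᵥ* _), ← dotProduct_mulVec]
  simp only [sub_im, star_def, conj_im]
  ring

end VectorCalculus

section Maxwell

open Matrix Metric Topology

/-- `E` and `H` are `C¹` on `U` and solve the time-harmonic Maxwell system `curl E = iαH`,
`curl H = -iβE` there; in the notation of the paper `α = ωμ₀` and `β = ωε₀`. -/
structure IsMaxwellOn (U : Set E3) (α β : ℝ) (E H : E3 → Fin 3 → ℂ) : Prop where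
  contDiffAt_left : ∀ x ∈ U, ContDiffAt ℝ 1 E x
  contDiffAt_right : ∀ x ∈ U, ContDiffAt ℝ 1 H x
  curlC_left : ∀ x ∈ U, curlC E x = (I * α) • H x
  curlC_right : ∀ x ∈ U, curlC H x = -(I * β) • E x

namespace IsMaxwellOn

variable {U : Set E3} {α β a r : ℝ} {E H : E3 → Fin 3 → ℂ} {x : E3}

theorem divC_left (hM : IsMaxwellOn U α β E H) (hU : IsOpen U) (hβ : β ≠ 0) (hx : x ∈ U) :
    divC E x = 0 := by
  have hcurl : curlC H =ᶠ[𝓝 x] fun y => -(I * β) • E y :=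
    Filter.eventually_of_mem (hU.mem_nhds hx) hM.curlC_right
  have hE := hM.contDiffAt_left x hx
  have hdiv : divC (curlC H) x = 0 :=
    divC_curlC (hM.contDiffAt_right x hx) ((hE.const_smul _).congr_of_eventuallyEq hcurl)
  rw [divC_congr hcurl, divC_const_smul _ (hE.differentiableAt one_ne_zero)] at hdiv
  simpa [hβ] using hdiv

theorem re_divC_crossC_star (hM : IsMaxwellOn U α β E H) (hx : x ∈ U) :
    (divC (fun y => crossC (E y) (star (H y))) x).re = 0 := by
  have hE := (hM.contDiffAt_left x hx).differentiableAt one_ne_zero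
  have hH := (hM.contDiffAt_right x hx).differentiableAt one_ne_zero
  rw [divC_crossC hE hH.star, curlC_star, hM.curlC_left x hx, hM.curlC_right x hx, star_smul,
    dotProduct_smul, dotProduct_smul, dotProduct_comm, dotProduct_star_self, dotProduct_star_self]
  simp [-ofReal_sum, -ofReal_pow]

theorem hasDerivAt_re_flux_crossC_star (hM : IsMaxwellOn U α β E H) (hr : 0 < r)
    (hU : sphere 0 r ⊆ U) :
    HasDerivAt (fun s => (flux (fun x => crossC (E x) (star (H x))) s).re) 0 r := by
  have hS (x) (hx : x ∈ sphere 0 r) : ContDiffAt ℝ 1 (fun y => crossC (E y) (star (H y))) x := by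
    have hE := hM.contDiffAt_left x (hU hx)
    have hH := hM.contDiffAt_right x (hU hx)
    fun_prop
  have hdivc : ContinuousOn (divC fun y => crossC (E y) (star (H y))) (sphere 0 r) :=
    fun x hx => (continuousAt_divC (hS x hx)).continuousWithinAt
  have hre : (sphereIntegral r (divC fun y => crossC (E y) (star (H y)))).re = 0 := by
    rw [re_sphereIntegral hr.le hdivc, sphereIntegral_congr hr.le (g := fun _ => (0 : ℝ))
      fun x hx => hM.re_divC_crossC_star (hU hx), sphereIntegral_const, smul_zero]
  refine (reCLM.hasFDerivAt.comp_hasDerivAt r (hasDerivAt_flux hr hS)).congr_deriv ?_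
  rw [← ofReal_pow, reCLM_apply, re_ofReal_mul, hre, mul_zero]

-- The energy flux is the same through all spheres around the origin.
theorem re_flux_crossC_star_nonpos (ha : 0 < a) (hM : IsMaxwellOn {x | a < ‖x‖} α β E H)
    (hEc : ContinuousOn E {x | a ≤ ‖x‖}) (hHc : ContinuousOn H {x | a ≤ ‖x‖})
    (hbc : ∀ x, ‖x‖ = a → (posC x ⬝ᵥ crossC (E x) (star (H x))).re ≤ 0) (hr : a ≤ r) :
    (flux (fun x => crossC (E x) (star (H x))) r).re ≤ 0 := by
  let f (s : ℝ) : ℝ := (flux (fun x => crossC (E x) (star (H x))) s).re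
  have hFc : ContinuousOn (fun x => crossC (E x) (star (H x))) (norm ⁻¹' Set.Ici a) := by
    fun_prop
  have hderiv (s : ℝ) (hs : s ∈ interior (Set.Ici a)) : HasDerivAt f 0 s := by
    rw [interior_Ici] at hs
    exact hM.hasDerivAt_re_flux_crossC_star (ha.trans hs) fun x hx => by simp_all
  have hanti : AntitoneOn f (Set.Ici a) := antitoneOn_of_deriv_nonpos (convex_Ici a)
    (continuous_re.comp_continuousOn (continuousOn_flux (fun s hs => ha.le.trans hs) hFc))
    (fun s hs => (hderiv s hs).differentiableAt.differentiableWithinAt)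
    fun s hs => (hderiv s hs).deriv.le
  refine (hanti Set.self_mem_Ici hr hr).trans ?_
  have hsub : sphere (0 : E3) a ⊆ norm ⁻¹' Set.Ici a := fun x hx => by simp_all
  have hpc : ContinuousOn (fun x => posC x ⬝ᵥ crossC (E x) (star (H x))) (sphere 0 a) := by
    have := hFc.mono hsub
    fun_prop
  simp only [f, flux, re_ofReal_mul]
  refine mul_nonpos_of_nonneg_of_nonpos ha.le ?_
  rw [re_sphereIntegral ha.le hpc]
  exact sphereIntegral_nonpos ha.le fun x hx => hbc x (mem_sphere_zero_iff_norm.1 hx)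

-- Up to a term without flux through spheres, `Im (Ē · ∂E)` is the radial energy flow.
theorem im_star_dotProduct_fderiv_self (hM : IsMaxwellOn U α β E H) (hU : IsOpen U) (hβ : β ≠ 0)
    (hx : x ∈ U) : (star (E x) ⬝ᵥ fderiv ℝ E x x).im =
      α * (posC x ⬝ᵥ crossC (E x) (star (H x))).re
        + (posC x ⬝ᵥ curlC (fun y => crossC (E y) (star (E y))) x).im / 2 := by
  have hE := (hM.contDiffAt_left x hx).differentiableAt one_ne_zero
  have hconj : posC x ⬝ᵥ crossC (star (E x)) (H x) =
      star (posC x ⬝ᵥ crossC (E x) (star (H x))) := by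
    simp [dotProduct, crossC, posC, Fin.sum_univ_three]
  rw [im_star_dotProduct_fderiv_self_of_divC_eq_zero hE (hM.divC_left hU hβ hx), hM.curlC_left x hx,
    crossC_smul, dotProduct_smul, hconj]
  simp

theorem sphereIntegral_im_star_dotProduct_fderiv_self_nonpos (hα : 0 ≤ α) (hβ : β ≠ 0) (hr : 0 < r)
    (hM : IsMaxwellOn U α β E H) (hU : IsOpen U) (hrU : sphere 0 r ⊆ U)
    (hflux : (flux (fun x => crossC (E x) (star (H x))) r).re ≤ 0) :
    sphereIntegral r (fun x => (star (E x) ⬝ᵥ fderiv ℝ E x x).im) ≤ 0 := by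
  let G (x : E3) : Fin 3 → ℂ := crossC (E x) (star (E x))
  let p (x : E3) : ℂ := posC x ⬝ᵥ crossC (E x) (star (H x))
  have hG (x) (hx : x ∈ sphere 0 r) : ContDiffAt ℝ 1 G x := by
    have hE := hM.contDiffAt_left x (hrU hx)
    fun_prop
  have hpc : ContinuousOn p (sphere 0 r) := fun x hx => by
    have hE := (hM.contDiffAt_left x (hrU hx)).continuousAt
    have hH := (hM.contDiffAt_right x (hrU hx)).continuousAt
    exact ContinuousAt.continuousWithinAt (by fun_prop)
  have hcurlc : ContinuousOn (fun x => posC x ⬝ᵥ curlC G x) (sphere 0 r) := fun x hx => by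
    have := continuousAt_curlC (hG x hx)
    exact ContinuousAt.continuousWithinAt (by fun_prop)
  have hpoint : Set.EqOn (fun x => (star (E x) ⬝ᵥ fderiv ℝ E x x).im)
      (fun x => α • (p x).re + (2⁻¹ : ℝ) • (posC x ⬝ᵥ curlC G x).im) (sphere 0 r) := fun x hx => by
    simp only [hM.im_star_dotProduct_fderiv_self hU hβ (hrU hx), p, G, smul_eq_mul]
    ring
  have hcurl : sphereIntegral r (fun x => (posC x ⬝ᵥ curlC G x).im) = 0 := by
    rw [← im_sphereIntegral hr.le hcurlc, sphereIntegral_posC_dotProduct_curlC hr.le hG, zero_im]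
  rw [flux, re_ofReal_mul] at hflux
  rw [sphereIntegral_congr hr.le hpoint, sphereIntegral_add hr.le (by fun_prop) (by fun_prop),
    sphereIntegral_const_smul, sphereIntegral_const_smul, hcurl, smul_zero, add_zero,
    ← re_sphereIntegral hr.le hpc]
  exact mul_nonpos_of_nonneg_of_nonpos hα (nonpos_of_mul_nonpos_right hflux hr)

end IsMaxwellOn

end Maxwell

section Radiation

open Matrix Metric Topology Filter

/-- The Sommerfeld radiation condition with wave number `k`: on the sphere of radius `R`, the field
`∂F/∂r - ikF` is `o(1/R)` uniformly in the direction as `R → ∞`. -/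
def IsRadiating (k : ℝ) (F : E3 → Fin 3 → ℂ) : Prop :=
  ∀ ε : ℝ, 0 < ε → ∃ R₀ : ℝ, ∀ R : ℝ, R₀ ≤ R → ∀ x : E3, ‖x‖ = R →
    ‖R • (radialDeriv F x - (I * k) • F x)‖ ≤ ε

/-- The decay at infinity of a scalar function `u` for which the uniqueness argument works: the
integrals of `|u|²` and `|∂u/∂r|²` over the sphere of radius `r` tend to zero as `r → ∞`. The
sphere has area `4πr²`, and `fderiv ℝ u x x` is `r ∂u/∂r` there. -/
structure IsL2Decaying (u : E3 → ℂ) : Prop where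
  tendsto_sq : Tendsto (fun r => r ^ 2 * sphereIntegral r fun x => ‖u x‖ ^ 2) atTop (𝓝 0)
  tendsto_fderiv : Tendsto (fun r => sphereIntegral r fun x => ‖fderiv ℝ u x x‖ ^ 2) atTop (𝓝 0)

theorem smul_radialDeriv {x : E3} (hx : x ≠ 0) (F : E3 → Fin 3 → ℂ) :
    ‖x‖ • radialDeriv F x = fderiv ℝ F x x := by
  rw [radialDeriv, ← map_smul, smul_inv_smul₀ (norm_ne_zero_iff.2 hx)]

theorem sum_norm_sub_I_smul_sq (z w : Fin 3 → ℂ) (t : ℝ) :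
    ∑ j, ‖(z - (I * t) • w) j‖ ^ 2 =
      ∑ j, ‖z j‖ ^ 2 + t ^ 2 * ∑ j, ‖w j‖ ^ 2 - 2 * t * (star w ⬝ᵥ z).im := by
  simp only [← normSq_eq_norm_sq, normSq_apply, dotProduct, Fin.sum_univ_three]
  simp
  ring

variable {k a : ℝ} {F : E3 → Fin 3 → ℂ}

theorem sq_add_sq_le_of_norm_le {r ε : ℝ} (hr : 0 < r) {x : E3} (hx : ‖x‖ = r)
    (h : ‖r • (radialDeriv F x - (I * k) • F x)‖ ≤ ε) (j : Fin 3) :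
    ‖fderiv ℝ F x x j‖ ^ 2 + (k * r) ^ 2 * ‖F x j‖ ^ 2 ≤
      3 * ε ^ 2 + 2 * (k * r) * (star (F x) ⬝ᵥ fderiv ℝ F x x).im := by
  have hx0 : x ≠ 0 := norm_pos_iff.1 (hx ▸ hr)
  have hv : r • (radialDeriv F x - (I * k) • F x) = fderiv ℝ F x x - (I * (k * r : ℝ)) • F x := by
    rw [smul_sub, ← hx, smul_radialDeriv hx0]
    congr 1
    ext i
    simp
    ring
  have hle : ∑ i, ‖(fderiv ℝ F x x - (I * (k * r : ℝ)) • F x) i‖ ^ 2 ≤ 3 * ε ^ 2 := by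
    rw [hv] at h
    have hi (i) := pow_le_pow_left₀ (norm_nonneg _) ((norm_le_pi_norm _ i).trans h) 2
    simpa using Finset.sum_le_card_nsmul Finset.univ _ _ fun i _ => hi i
  rw [sum_norm_sub_I_smul_sq] at hle
  have hD := Finset.single_le_sum (f := fun i => ‖fderiv ℝ F x x i‖ ^ 2)
    (fun i _ => by positivity) (Finset.mem_univ j)
  have hF := mul_le_mul_of_nonneg_left (Finset.single_le_sum (f := fun i => ‖F x i‖ ^ 2)
    (fun i _ => by positivity) (Finset.mem_univ j)) (sq_nonneg (k * r))
  linarith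

theorem sphereIntegral_sq_add_sq_le {r ε : ℝ} (hk : 0 ≤ k) (hr : 0 < r)
    (hF : ∀ x ∈ sphere 0 r, ContDiffAt ℝ 1 F x)
    (hrad : ∀ x, ‖x‖ = r → ‖r • (radialDeriv F x - (I * k) • F x)‖ ≤ ε)
    (hflux : sphereIntegral r (fun x => (star (F x) ⬝ᵥ fderiv ℝ F x x).im) ≤ 0) (j : Fin 3) :
    sphereIntegral r (fun x => ‖fderiv ℝ (fun y => F y j) x x‖ ^ 2)
        + (k * r) ^ 2 * sphereIntegral r (fun x => ‖F x j‖ ^ 2) ≤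
      (volume : Measure E3).toSphere.real Set.univ * (3 * ε ^ 2) := by
  have hFc : ContinuousOn F (sphere 0 r) := fun x hx => (hF x hx).continuousAt.continuousWithinAt
  have hDc : ContinuousOn (fun x => fderiv ℝ F x x) (sphere 0 r) :=
    continuousOn_fderiv_self hF
  have hIm : ContinuousOn (fun x => (star (F x) ⬝ᵥ fderiv ℝ F x x).im) (sphere 0 r) := by
    fun_prop
  rw [sphereIntegral_congr hr.le (g := fun x => ‖fderiv ℝ F x x j‖ ^ 2) fun x hx => by
      simp only [fderiv_component ((hF x hx).differentiableAt one_ne_zero)],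
    ← smul_eq_mul, ← sphereIntegral_const_smul, ← sphereIntegral_add hr.le (by fun_prop)
      (by fun_prop)]
  calc _ ≤ sphereIntegral r (fun x => 3 * ε ^ 2
        + (2 * (k * r)) • (star (F x) ⬝ᵥ fderiv ℝ F x x).im) :=
      sphereIntegral_mono hr.le (by fun_prop) (by fun_prop) fun x hx =>
        have hx := mem_sphere_zero_iff_norm.1 hx
        sq_add_sq_le_of_norm_le hr hx (hrad x hx) j
    _ ≤ _ := by
      rw [sphereIntegral_add hr.le continuousOn_const (by fun_prop), sphereIntegral_const,
        sphereIntegral_const_smul, smul_eq_mul, smul_eq_mul]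
      linarith [mul_nonpos_of_nonneg_of_nonpos (show 0 ≤ 2 * (k * r) by positivity) hflux]

theorem IsRadiating.tendsto_sphereIntegral (hk : 0 ≤ k) (ha : 0 ≤ a) (hF : IsRadiating k F)
    (hF1 : ∀ x, a < ‖x‖ → ContDiffAt ℝ 1 F x)
    (hflux : ∀ r, a < r → sphereIntegral r (fun x => (star (F x) ⬝ᵥ fderiv ℝ F x x).im) ≤ 0)
    (j : Fin 3) :
    Tendsto (fun r => sphereIntegral r (fun x => ‖fderiv ℝ (fun y => F y j) x x‖ ^ 2)
      + (k * r) ^ 2 * sphereIntegral r (fun x => ‖F x j‖ ^ 2)) atTop (𝓝 0) := by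
  refine tendsto_order.2 ⟨fun b hb => ?_, fun δ hδ => ?_⟩
  · filter_upwards [eventually_ge_atTop 0] with r hr
    have hD := sphereIntegral_nonneg hr (f := fun x => ‖fderiv ℝ (fun y => F y j) x x‖ ^ 2)
      fun x _ => by positivity
    have hu := sphereIntegral_nonneg hr (f := fun x => ‖F x j‖ ^ 2) fun x _ => by positivity
    exact hb.trans_le (by positivity)
  · have hlim : Tendsto (fun ε : ℝ => (volume : Measure E3).toSphere.real Set.univ * (3 * ε ^ 2))
        (𝓝[>] 0) (𝓝 0) :=
      tendsto_nhdsWithin_of_tendsto_nhds (Continuous.tendsto' (by fun_prop) _ _ (by simp))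
    obtain ⟨ε, hεδ, hε⟩ := ((hlim.eventually_lt_const hδ).and self_mem_nhdsWithin).exists
    obtain ⟨R₀, hR₀⟩ := hF ε hε
    filter_upwards [eventually_ge_atTop R₀, eventually_gt_atTop a] with r hr har
    exact (sphereIntegral_sq_add_sq_le hk (ha.trans_lt har) (fun x hx => hF1 x (by simp_all))
      (hR₀ r hr) (hflux r har) j).trans_lt hεδ

theorem IsRadiating.isL2Decaying_component (hk : 0 < k) (ha : 0 ≤ a) (hF : IsRadiating k F)
    (hF1 : ∀ x, a < ‖x‖ → ContDiffAt ℝ 1 F x)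
    (hflux : ∀ r, a < r → sphereIntegral r (fun x => (star (F x) ⬝ᵥ fderiv ℝ F x x).im) ≤ 0)
    (j : Fin 3) : IsL2Decaying fun x => F x j := by
  have hlim := hF.tendsto_sphereIntegral hk.le ha hF1 hflux j
  have hD (r : ℝ) (hr : 0 ≤ r) :
      0 ≤ sphereIntegral r (fun x => ‖fderiv ℝ (fun y => F y j) x x‖ ^ 2) :=
    sphereIntegral_nonneg hr fun x _ => by positivity
  have hu (r : ℝ) (hr : 0 ≤ r) : 0 ≤ sphereIntegral r (fun x => ‖F x j‖ ^ 2) :=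
    sphereIntegral_nonneg hr fun x _ => by positivity
  constructor
  · have hlim' := hlim.const_mul (k ^ 2)⁻¹
    rw [mul_zero] at hlim'
    refine squeeze_zero' ?_ ?_ hlim'
    · filter_upwards [eventually_ge_atTop 0] with r hr using mul_nonneg (sq_nonneg r) (hu r hr)
    · filter_upwards [eventually_ge_atTop 0] with r hr
      rw [le_inv_mul_iff₀ (by positivity), ← mul_assoc, ← mul_pow]
      exact le_add_of_nonneg_left (hD r hr)
  · refine squeeze_zero' ?_ ?_ hlim
    · filter_upwards [eventually_ge_atTop 0] with r hr using hD r hr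
    · filter_upwards [eventually_ge_atTop 0] with r hr
      exact le_add_of_nonneg_right (mul_nonneg (sq_nonneg _) (hu r hr))

end Radiation

section Bessel

open Filter Topology

variable {V : Type*} [NormedAddCommGroup V] [InnerProductSpace ℝ V] {a k N : ℝ} {g q : ℝ → V}

-- By Cauchy-Schwarz, `2 (N / r ^ 2) ⟪g, q⟫ ≥ -(N / (k r ^ 2)) (‖q‖ ^ 2 + k ^ 2 ‖g‖ ^ 2)`, which
-- the derivative of the exponential weight absorbs.
theorem monotoneOn_weighted_energy (ha : 0 ≤ a) (hk : 0 < k) (hN : 0 ≤ N)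
    (hg : ∀ r, a < r → HasDerivAt g (q r) r)
    (hq : ∀ r, a < r → HasDerivAt q ((N / r ^ 2 - k ^ 2) • g r) r) :
    MonotoneOn (fun r => Real.exp (-(N / k) * r⁻¹) * (‖q r‖ ^ 2 + k ^ 2 * ‖g r‖ ^ 2))
      (Set.Ioi a) := by
  have hderiv (s) (hs : s ∈ Set.Ioi a) :=
    ((hasDerivAt_inv (ha.trans_lt hs).ne').const_mul (-(N / k))).exp.fun_mul
      ((hq s hs).norm_sq.fun_add ((hg s hs).norm_sq.const_mul (k ^ 2)))
  refine monotoneOn_of_deriv_nonneg (convex_Ioi a)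
    (fun s hs => (hderiv s hs).continuousAt.continuousWithinAt) ?_ ?_
  all_goals rw [interior_Ioi]
  · exact fun s hs => (hderiv s hs).differentiableAt.differentiableWithinAt
  intro s hs
  rw [(hderiv s hs).deriv]
  have hs_pos : 0 < s := ha.trans_lt hs
  have hinner := neg_le_of_abs_le (abs_real_inner_le_norm (g s) (q s))
  have henergy : 0 ≤ 2 * k * inner ℝ (g s) (q s) + (‖q s‖ ^ 2 + k ^ 2 * ‖g s‖ ^ 2) := by
    nlinarith [sq_nonneg (‖q s‖ - k * ‖g s‖)]
  have hweight : 0 ≤ N / (k * s ^ 2) * Real.exp (-(N / k) * s⁻¹) := by positivity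
  refine (mul_nonneg hweight henergy).trans_eq ?_
  rw [inner_smul_right, real_inner_comm]
  field_simp
  ring

theorem eq_zero_of_hasDerivAt_of_tendsto_zero (ha : 0 ≤ a) (hk : 0 < k) (hN : 0 ≤ N)
    (hg : ∀ r, a < r → HasDerivAt g (q r) r)
    (hq : ∀ r, a < r → HasDerivAt q ((N / r ^ 2 - k ^ 2) • g r) r)
    (hg_lim : Tendsto g atTop (𝓝 0)) (hq_lim : Tendsto q atTop (𝓝 0)) {r : ℝ} (hr : a < r) :
    g r = 0 := by
  have hmono := monotoneOn_weighted_energy ha hk hN hg hq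
  have hlim : Tendsto (fun r => Real.exp (-(N / k) * r⁻¹) * (‖q r‖ ^ 2 + k ^ 2 * ‖g r‖ ^ 2))
      atTop (𝓝 0) := by
    have hweight := (Real.continuous_exp.tendsto _).comp
      (tendsto_inv_atTop_zero.const_mul (-(N / k)))
    simpa using hweight.mul ((hq_lim.norm.pow 2).add ((hg_lim.norm.pow 2).const_mul (k ^ 2)))
  have hle := ge_of_tendsto hlim <| by
    filter_upwards [eventually_ge_atTop r] with s hs using hmono hr (hr.trans_le hs) hs
  have henergy : ‖q r‖ ^ 2 + k ^ 2 * ‖g r‖ ^ 2 ≤ 0 :=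
    nonpos_of_mul_nonpos_right hle (Real.exp_pos _)
  have hg_sq : k ^ 2 * ‖g r‖ ^ 2 = 0 := by
    have : 0 ≤ k ^ 2 * ‖g r‖ ^ 2 := by positivity
    linarith [sq_nonneg ‖q r‖]
  simpa [hk.ne'] using hg_sq

theorem hasDerivAt_inv_ofReal_pow (n : ℕ) {r : ℝ} (hr : r ≠ 0) :
    HasDerivAt (fun s : ℝ => ((s : ℂ) ^ n)⁻¹) (-(n * (r : ℂ)⁻¹ * ((r : ℂ) ^ n)⁻¹)) r := by
  have hr' : (r : ℂ) ≠ 0 := ofReal_ne_zero.2 hr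
  refine (((hasDerivAt_id r).ofReal_comp.fun_pow n).fun_inv (pow_ne_zero n hr')).congr_deriv ?_
  rcases n with - | n
  · simp
  · simp only [add_tsub_cancel_right, id_eq, ofReal_one, mul_one]
    field_simp
    ring

-- The substitution `g = r ^ (1 - n) m` gives the Liouville normal form `g'' = (n(n+1)/r² - k²) g`.
theorem eq_zero_of_sphericalBessel {n : ℕ} {m W : ℝ → ℂ} (ha : 0 ≤ a) (hk : 0 < k)
    (hm : ∀ r, a < r → HasDerivAt m ((r : ℂ)⁻¹ * (W r + n * m r)) r)
    (hW : ∀ r, a < r → HasDerivAt (fun r : ℝ => r * (W r - n * m r))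
      (-((r : ℂ) ^ 2 * (k ^ 2 * m r))) r)
    (hm_lim : Tendsto (fun r : ℝ => r * (((r : ℂ) ^ n)⁻¹ * m r)) atTop (𝓝 0))
    (hW_lim : Tendsto (fun r : ℝ => ((r : ℂ) ^ n)⁻¹ * W r) atTop (𝓝 0)) {r : ℝ} (hr : a < r) :
    m r = 0 := by
  let g (r : ℝ) : ℂ := r * (((r : ℂ) ^ n)⁻¹ * m r)
  let q (r : ℝ) : ℂ := ((r : ℂ) ^ n)⁻¹ * (W r + m r)
  have ha0 {s} (hs : a < s) : (s : ℂ) ≠ 0 := ofReal_ne_zero.2 (ha.trans_lt hs).ne'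
  have hg (s) (hs : a < s) : HasDerivAt g (q s) s := by
    have := ha0 hs
    refine ((hasDerivAt_id s).ofReal_comp.fun_mul ((hasDerivAt_inv_ofReal_pow n
      (ha.trans_lt hs).ne').fun_mul (hm s hs))).congr_deriv ?_
    simp only [q, id_eq, ofReal_one]
    field_simp
    ring
  have hq (s) (hs : a < s) : HasDerivAt q (((n * (n + 1) : ℝ) / s ^ 2 - k ^ 2) • g s) s := by
    have hs0 := ha0 hs
    have hq_eq : q =ᶠ[𝓝 s] fun t => ((t : ℂ) ^ n)⁻¹ *
        (((t : ℂ) ^ 1)⁻¹ * (t * (W t - n * m t)) + (n + 1) * m t) := by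
      filter_upwards [lt_mem_nhds hs] with t ht
      have := ha0 ht
      simp only [q]
      field_simp
      ring
    refine (((hasDerivAt_inv_ofReal_pow n (ha.trans_lt hs).ne').fun_mul
      (((hasDerivAt_inv_ofReal_pow 1 (ha.trans_lt hs).ne').fun_mul (hW s hs)).fun_add
        ((hm s hs).const_mul (n + 1 : ℂ)))).congr_of_eventuallyEq hq_eq).congr_deriv ?_
    simp only [g, real_smul]
    push_cast
    field_simp
    ring
  have hq_lim : Tendsto q atTop (𝓝 0) := by
    have hinv := (continuous_ofReal.tendsto 0).comp tendsto_inv_atTop_zero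
    have hsum := hW_lim.add (hinv.mul hm_lim)
    simp only [ofReal_zero, mul_zero, add_zero] at hsum
    refine hsum.congr' ?_
    filter_upwards [eventually_gt_atTop a] with s hs
    simp [q, mul_add, ha0 hs]
  have hgr := eq_zero_of_hasDerivAt_of_tendsto_zero ha hk (by positivity) hg hq hm_lim hq_lim hr
  simpa [g, ha0 hr] using hgr

end Bessel

section Rellich

open Metric Matrix Filter Topology MvPolynomial

theorem gradC_polyC (P : MvPolynomial (Fin 3) ℝ) (x : E3) :
    gradC (polyC P) x = fun j => polyC (pderiv j P) x := by
  have hdiff (Q : MvPolynomial (Fin 3) ℝ) : DifferentiableAt ℝ (fun y => aeval (posC y) Q) x :=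
    (contDiff_polyC Q (n := 1)).differentiable one_ne_zero x
  ext j
  unfold gradC pdC polyC
  induction P using MvPolynomial.induction_on with
  | C c => simp
  | add P Q hP hQ => simp [fderiv_fun_add (hdiff P) (hdiff Q), hP, hQ]
  | mul_X P i hP =>
    have hX : fderiv ℝ (fun y => aeval (posC y) (X i : MvPolynomial (Fin 3) ℝ)) x
        (EuclideanSpace.single j 1) = aeval (posC x) (pderiv j (X i : MvPolynomial (Fin 3) ℝ)) := by
      simpa [gradC, pdC, jacC, posC, pderiv_X, Matrix.one_apply, Pi.single_apply, eq_comm] using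
        congrFun (congrFun (jacC_posC x) i) j
    simp only [map_mul, fderiv_fun_mul (hdiff P) (hdiff (X i)), _root_.add_apply,
      _root_.smul_apply, hP, hX, Derivation.leibniz, map_add, smul_eq_mul]

/-- The Laplacian of a polynomial. -/
def polyLaplacian (P : MvPolynomial (Fin 3) ℝ) : MvPolynomial (Fin 3) ℝ :=
  ∑ i, pderiv i (pderiv i P)

theorem divC_gradC_polyC (P : MvPolynomial (Fin 3) ℝ) (x : E3) :
    divC (gradC (polyC P)) x = polyC (polyLaplacian P) x := by
  have hcomp (i : Fin 3) : gradC (fun y => gradC (polyC P) y i) x i =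
      polyC (pderiv i (pderiv i P)) x := by
    simp only [gradC_polyC]
  simp only [divC, trace, diag, jacC, of_apply, hcomp, polyLaplacian, polyC, map_sum]

theorem polyLaplacian_isHomogeneous {P : MvPolynomial (Fin 3) ℝ} {n : ℕ} (hP : P.IsHomogeneous n) :
    (polyLaplacian P).IsHomogeneous (n - 1 - 1) :=
  IsHomogeneous.sum _ _ _ fun _ _ => hP.pderiv.pderiv

theorem polyLaplacian_eq_zero {P : MvPolynomial (Fin 3) ℝ} (hP : P.IsHomogeneous 0) :
    polyLaplacian P = 0 := by
  rw [totalDegree_eq_zero_iff_eq_C.1 (Nat.le_zero.1 hP.totalDegree_le)]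
  simp [polyLaplacian]

/-- The Helmholtz equation `Δu + κu = 0` outside the ball of radius `a` for a function `u` that is
merely `C¹`, expressed by Green's second identity on spherical shells against polynomials `P`:
the flux of `P∇u - u∇P` has the derivative that its divergence `-(κP + ΔP)u` would give. -/
structure IsWeakHelmholtz (a κ : ℝ) (u : E3 → ℂ) : Prop where
  contDiffAt : ∀ x, a < ‖x‖ → ContDiffAt ℝ 1 u x
  hasDerivAt_flux : ∀ P r, a < r →
    HasDerivAt (flux fun x => polyC P x • gradC u x - u x • gradC (polyC P) x)
      (-((r : ℂ) ^ 2 * sphereIntegral r fun x =>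
        (κ * polyC P x + polyC (polyLaplacian P) x) * u x)) r

variable {a k κ : ℝ} {u : E3 → ℂ} {P : MvPolynomial (Fin 3) ℝ} {n : ℕ}

theorem exists_norm_sphereIntegral_polyC_mul_sq_le (hP : P.IsHomogeneous n) :
    ∃ C : ℝ, ∀ r > 0, ∀ v, ContinuousOn v (sphere 0 r) →
      ‖sphereIntegral r fun x => polyC P x * v x‖ ^ 2 ≤
        C * (r ^ n) ^ 2 * sphereIntegral r fun x => ‖v x‖ ^ 2 := by
  obtain ⟨C, hC⟩ := exists_norm_polyC_le hP
  have hPc := (contDiff_polyC P (n := 0)).continuous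
  refine ⟨(volume : Measure E3).toSphere.real Set.univ * C ^ 2, fun r hr v hv => ?_⟩
  rw [mul_assoc, mul_assoc, ← mul_assoc (C ^ 2), ← mul_pow, ← smul_eq_mul (_ ^ 2),
    ← sphereIntegral_const_smul]
  refine (norm_sphereIntegral_sq_le hr.le (by fun_prop)).trans ?_
  gcongr
  refine sphereIntegral_mono hr.le (by fun_prop) (by fun_prop) fun x hx => ?_
  have hx : ‖x‖ = r := mem_sphere_zero_iff_norm.1 hx
  rw [norm_mul, mul_pow, smul_eq_mul]
  gcongr
  exact hx ▸ hC x (norm_pos_iff.1 (hx ▸ hr))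

theorem tendsto_inv_pow_mul_sphereIntegral_polyC_mul (hP : P.IsHomogeneous n) {c : ℝ → ℝ}
    {v : E3 → ℂ} (hv : ∀ x, a < ‖x‖ → ContinuousAt v x)
    (hlim : Tendsto (fun r => c r ^ 2 * sphereIntegral r fun x => ‖v x‖ ^ 2) atTop (𝓝 0)) :
    Tendsto (fun r : ℝ => (c r : ℂ) * (((r : ℂ) ^ n)⁻¹ * sphereIntegral r fun x => polyC P x * v x))
      atTop (𝓝 0) := by
  obtain ⟨C, hC⟩ := exists_norm_sphereIntegral_polyC_mul_sq_le hP
  have hbound : ∀ᶠ r : ℝ in atTop,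
      ‖(c r : ℂ) * (((r : ℂ) ^ n)⁻¹ * sphereIntegral r fun x => polyC P x * v x)‖ ^ 2 ≤
        C * (c r ^ 2 * sphereIntegral r fun x => ‖v x‖ ^ 2) := by
    filter_upwards [eventually_gt_atTop a, eventually_gt_atTop 0] with r har hr
    have hvc : ContinuousOn v (sphere 0 r) := fun x hx =>
      (hv x (by rwa [mem_sphere_zero_iff_norm.1 hx])).continuousWithinAt
    calc _ = (c r * (r ^ n)⁻¹) ^ 2 * ‖sphereIntegral r fun x => polyC P x * v x‖ ^ 2 := by
          rw [← mul_assoc, norm_mul, mul_pow, ← ofReal_pow, ← ofReal_inv, ← ofReal_mul, norm_real,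
            Real.norm_eq_abs, sq_abs]
      _ ≤ (c r * (r ^ n)⁻¹) ^ 2 * (C * (r ^ n) ^ 2 * sphereIntegral r fun x => ‖v x‖ ^ 2) := by
          gcongr
          exact hC r hr v hvc
      _ = _ := by field_simp
  have hsq := squeeze_zero' (.of_forall fun _ => by positivity) hbound
    (by simpa using hlim.const_mul C)
  have hsqrt := (Real.continuous_sqrt.tendsto 0).comp hsq
  simp only [Function.comp_def, Real.sqrt_sq (norm_nonneg _), Real.sqrt_zero] at hsqrt
  exact tendsto_zero_iff_norm_tendsto_zero.2 hsqrt

theorem fderiv_polyC_self (hP : P.IsHomogeneous n) (x : E3) :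
    fderiv ℝ (polyC P) x x = n * polyC P x := by
  rw [fderiv_eq_dotProduct_gradC, gradC_polyC, posC_dotProduct_polyC_pderiv hP]

theorem hasDerivAt_sphereIntegral_polyC_mul {r : ℝ} (hr : 0 < r) (hP : P.IsHomogeneous n)
    (hu : ∀ x ∈ sphere 0 r, ContDiffAt ℝ 1 u x) :
    HasDerivAt (fun r => sphereIntegral r fun x => polyC P x * u x)
      ((r : ℂ)⁻¹ * ((sphereIntegral r fun x => polyC P x * fderiv ℝ u x x) +
        n * sphereIntegral r fun x => polyC P x * u x)) r := by
  have hPc := (contDiff_polyC P (n := 0)).continuous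
  have huc : ContinuousOn u (sphere 0 r) := fun x hx => (hu x hx).continuousAt.continuousWithinAt
  have hDc : ContinuousOn (fun x => fderiv ℝ u x x) (sphere 0 r) :=
    continuousOn_fderiv_self hu
  refine (hasDerivAt_sphereIntegral hr fun x hx =>
    (contDiff_polyC P).contDiffAt.mul (hu x hx)).congr_deriv ?_
  rw [← smul_eq_mul (n : ℂ), ← sphereIntegral_const_smul (n : ℂ),
    ← sphereIntegral_add hr.le (by fun_prop) (by fun_prop), real_smul, ofReal_inv]
  congr 1
  refine sphereIntegral_congr hr.le fun x hx => ?_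
  simp only [fderiv_fun_mul ((contDiff_polyC P (n := 1)).differentiable one_ne_zero x)
    ((hu x hx).differentiableAt one_ne_zero), _root_.add_apply, _root_.smul_apply, smul_eq_mul,
    fderiv_polyC_self hP]
  ring

theorem flux_polyC_smul_gradC_sub {r : ℝ} (hr : 0 ≤ r) (hP : P.IsHomogeneous n)
    (hu : ∀ x ∈ sphere 0 r, ContDiffAt ℝ 1 u x) :
    flux (fun x => polyC P x • gradC u x - u x • gradC (polyC P) x) r =
      r * ((sphereIntegral r fun x => polyC P x * fderiv ℝ u x x) -
        n * sphereIntegral r fun x => polyC P x * u x) := by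
  have hPc := (contDiff_polyC P (n := 0)).continuous
  have huc : ContinuousOn u (sphere 0 r) := fun x hx => (hu x hx).continuousAt.continuousWithinAt
  have hDc : ContinuousOn (fun x => fderiv ℝ u x x) (sphere 0 r) :=
    continuousOn_fderiv_self hu
  rw [← smul_eq_mul (n : ℂ), ← sphereIntegral_const_smul (n : ℂ),
    ← sphereIntegral_sub hr (by fun_prop) (by fun_prop), flux]
  congr 2 with x
  rw [dotProduct_sub, dotProduct_smul, dotProduct_smul, ← fderiv_eq_dotProduct_gradC,
    ← fderiv_eq_dotProduct_gradC, fderiv_polyC_self hP]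
  simp only [smul_eq_mul]
  ring

namespace IsWeakHelmholtz

theorem sphereIntegral_polyC_mul_eq_zero_of_isHomogeneous (hu : IsWeakHelmholtz a (k ^ 2) u)
    (ha : 0 ≤ a) (hk : 0 < k) (hdecay : IsL2Decaying u) (hP : P.IsHomogeneous n) {r : ℝ}
    (hr : a < r) : sphereIntegral r (fun x => polyC P x * u x) = 0 := by
  induction n using Nat.strong_induction_on generalizing P r with | _ n ih
  have hu1 {s : ℝ} (hs : a < s) (x) (hx : x ∈ sphere 0 s) : ContDiffAt ℝ 1 u x :=
    hu.contDiffAt x (by rwa [mem_sphere_zero_iff_norm.1 hx])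
  have hlaplacian (s) (hs : a < s) :
      sphereIntegral s (fun x => polyC (polyLaplacian P) x * u x) = 0 := by
    rcases n with - | n
    · simp [polyLaplacian_eq_zero hP, polyC, sphereIntegral]
    · exact ih _ (by omega) (polyLaplacian_isHomogeneous hP) hs
  refine eq_zero_of_sphericalBessel (n := n)
    (m := fun r => sphereIntegral r fun x => polyC P x * u x)
    (W := fun r => sphereIntegral r fun x => polyC P x * fderiv ℝ u x x) ha hk
    (fun s hs => hasDerivAt_sphereIntegral_polyC_mul (ha.trans_lt hs) hP (hu1 hs)) ?_ ?_ ?_ hr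
  · intro s hs
    have huc : ContinuousOn u (sphere 0 s) := fun x hx =>
      (hu1 hs x hx).continuousAt.continuousWithinAt
    have hPc (Q : MvPolynomial (Fin 3) ℝ) := (contDiff_polyC Q (n := 0)).continuous
    refine ((hu.hasDerivAt_flux P s hs).congr_of_eventuallyEq ?_).congr_deriv ?_
    · filter_upwards [lt_mem_nhds hs] with t ht
      exact (flux_polyC_smul_gradC_sub (ha.trans_lt ht).le hP (hu1 ht)).symm
    · simp only [add_mul, mul_assoc]
      rw [sphereIntegral_add (ha.trans_lt hs).le (by fun_prop) (by fun_prop), hlaplacian s hs,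
        add_zero, ← ofReal_pow k, ← smul_eq_mul ((k ^ 2 : ℝ) : ℂ), ← sphereIntegral_const_smul]
      rfl
  · exact tendsto_inv_pow_mul_sphereIntegral_polyC_mul hP
      (fun x hx => (hu.contDiffAt x hx).continuousAt) hdecay.tendsto_sq
  · have hlim := tendsto_inv_pow_mul_sphereIntegral_polyC_mul hP (c := fun _ => 1) (a := a)
      (v := fun x => fderiv ℝ u x x) (fun x hx => ((hu.contDiffAt x hx).fderiv_right (m := 0)
        (by simp)).continuousAt.clm_apply continuousAt_id) (by simpa using hdecay.tendsto_fderiv)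
    simpa using hlim

theorem eq_zero (hu : IsWeakHelmholtz a (k ^ 2) u) (ha : 0 ≤ a) (hk : 0 < k)
    (hdecay : IsL2Decaying u) {x : E3} (hx : a < ‖x‖) : u x = 0 := by
  have huc : ContinuousOn u (sphere 0 ‖x‖) := fun y hy =>
    (hu.contDiffAt y (by rwa [mem_sphere_zero_iff_norm.1 hy])).continuousAt.continuousWithinAt
  refine eqOn_zero_of_forall_sphereIntegral_polyC_mul_eq_zero (ha.trans_lt hx) huc (fun P => ?_)
    (mem_sphere_zero_iff_norm.2 rfl)
  have hP (y) : polyC P y * u y = ∑ i ∈ Finset.range (P.totalDegree + 1),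
      polyC (homogeneousComponent i P) y * u y := by
    conv_lhs => rw [← sum_homogeneousComponent P, polyC, map_sum, Finset.sum_mul]
    rfl
  simp only [hP]
  rw [sphereIntegral_sum _ (norm_nonneg x) fun i _ =>
    (contDiff_polyC _ (n := 0)).continuous.continuousOn.fun_mul huc]
  exact Finset.sum_eq_zero fun i _ => sphereIntegral_polyC_mul_eq_zero_of_isHomogeneous hu ha hk
    hdecay (homogeneousComponent_isHomogeneous i P) hx

end IsWeakHelmholtz

end Rellich

section MaxwellHelmholtz

open Matrix Metric Topology Filter

theorem curlC_gradC {φ : E3 → ℂ} {x : E3} (hφ : ContDiffAt ℝ 2 φ x) :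
    curlC (gradC φ) x = 0 := by
  have hsymm : IsSymmSndFDerivAt ℝ φ x := hφ.isSymmSndFDerivAt (by simp)
  have hd : DifferentiableAt ℝ (fderiv ℝ φ) x :=
    (hφ.fderiv_right (m := 1) (by norm_num)).differentiableAt one_ne_zero
  have hpd (i j : Fin 3) : pdC (fun y => gradC φ y i) j x = pdC (fun y => gradC φ y j) i x := by
    simp only [gradC, pdC]
    rw [fderiv_clm_apply hd (differentiableAt_const _),
      fderiv_clm_apply hd (differentiableAt_const _)]
    simpa using hsymm.eq _ _
  ext i
  fin_cases i <;> simp [curlC, hpd]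

theorem curlC_const (v : Fin 3 → ℂ) (x : E3) : curlC (fun _ => v) x = 0 := by
  ext i
  fin_cases i <;> simp [curlC, pdC]

/-- The field `φ∇u - u∇φ` of Green's second identity for the component `u = e · E` of a solution
`E`, `H` of the Maxwell system, plus `curl(φ e × E)`. The curl has no flux through spheres, and
adding it removes the derivatives of `E`, so that the sum is again `C¹`. -/
def greenField (α : ℝ) (e : Fin 3 → ℂ) (φ : E3 → ℂ) (E H : E3 → Fin 3 → ℂ) (x : E3) : Fin 3 → ℂ :=
  (I * α) • φ x • crossC e (H x) + crossC (gradC φ x) (crossC e (E x)) - (e ⬝ᵥ E x) • gradC φ x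

namespace IsMaxwellOn

variable {U : Set E3} {α β a r : ℝ} {E H : E3 → Fin 3 → ℂ} {φ : E3 → ℂ} {x : E3}

theorem contDiffAt_greenField (hM : IsMaxwellOn U α β E H) (hx : x ∈ U) (e : Fin 3 → ℂ)
    (hφ : ContDiffAt ℝ 2 φ x) : ContDiffAt ℝ 1 (greenField α e φ E H) x := by
  have hE := hM.contDiffAt_left x hx
  have hH := hM.contDiffAt_right x hx
  have hgrad := contDiffAt_gradC (m := 1) hφ (by norm_num)
  have hφ1 := hφ.of_le one_le_two
  unfold greenField
  fun_prop

theorem smul_crossC_right (hM : IsMaxwellOn U α β E H) (hx : x ∈ U) (e : Fin 3 → ℂ) :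
    (I * α) • crossC e (H x) = e ᵥ* jacC E x - jacC E x *ᵥ e := by
  rw [← crossC_curlC, hM.curlC_left x hx, crossC_smul]

theorem curlC_const_crossC_left (hM : IsMaxwellOn U α β E H) (hU : IsOpen U) (hβ : β ≠ 0)
    (hx : x ∈ U) (e : Fin 3 → ℂ) : curlC (fun y => crossC e (E y)) x = -(jacC E x *ᵥ e) := by
  have hE := (hM.contDiffAt_left x hx).differentiableAt one_ne_zero
  rw [curlC_crossC (differentiableAt_const e) hE, hM.divC_left hU hβ hx, divC, jacC_const]
  simp

theorem greenField_eq (hM : IsMaxwellOn U α β E H) (hU : IsOpen U) (hβ : β ≠ 0) (hx : x ∈ U)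
    (e : Fin 3 → ℂ) (hφ : DifferentiableAt ℝ φ x) :
    greenField α e φ E H x = φ x • gradC (fun y => e ⬝ᵥ E y) x - (e ⬝ᵥ E x) • gradC φ x
      + curlC (fun y => φ y • crossC e (E y)) x := by
  have hE := (hM.contDiffAt_left x hx).differentiableAt one_ne_zero
  have he : DifferentiableAt ℝ (fun _ : E3 => e) x := differentiableAt_const e
  rw [greenField, smul_comm, hM.smul_crossC_right hx, gradC_dotProduct he hE, jacC_const,
    vecMul_zero, add_zero, curlC_smul hφ (by fun_prop), hM.curlC_const_crossC_left hU hβ hx,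
    smul_sub, smul_neg]
  abel

theorem divC_greenField (hM : IsMaxwellOn U α β E H) (hU : IsOpen U) (hβ : β ≠ 0) (hx : x ∈ U)
    (e : Fin 3 → ℂ) (hφ : ContDiffAt ℝ 2 φ x) :
    divC (greenField α e φ E H) x =
      -(((α * β : ℝ) * φ x + divC (gradC φ) x) * (e ⬝ᵥ E x)) := by
  have hE := (hM.contDiffAt_left x hx).differentiableAt one_ne_zero
  have hH := (hM.contDiffAt_right x hx).differentiableAt one_ne_zero
  have he : DifferentiableAt ℝ (fun _ : E3 => e) x := differentiableAt_const e
  have hφ1 := hφ.differentiableAt two_ne_zero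
  have hgrad := (contDiffAt_gradC (m := 1) hφ (by norm_num)).differentiableAt one_ne_zero
  have hfirst : divC (fun y => (I * α) • φ y • crossC e (H y)) x =
      gradC φ x ⬝ᵥ (e ᵥ* jacC E x - jacC E x *ᵥ e) - (α * β : ℝ) * φ x * (e ⬝ᵥ E x) := by
    rw [divC_const_smul _ (by fun_prop), divC_smul hφ1 (by fun_prop),
      divC_crossC he hH, curlC_const, hM.curlC_right x hx, ← hM.smul_crossC_right hx,
      dotProduct_zero, dotProduct_smul, dotProduct_smul, smul_eq_mul, smul_eq_mul]
    push_cast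
    linear_combination (α * β * φ x * (e ⬝ᵥ E x)) * I_sq
  have hsecond : divC (fun y => crossC (gradC φ y) (crossC e (E y))) x =
      gradC φ x ⬝ᵥ (jacC E x *ᵥ e) := by
    rw [divC_crossC hgrad (by fun_prop), curlC_gradC hφ,
      hM.curlC_const_crossC_left hU hβ hx, dotProduct_zero, zero_sub, dotProduct_neg, neg_neg]
  have hthird : divC (fun y => (e ⬝ᵥ E y) • gradC φ y) x =
      (e ⬝ᵥ E x) * divC (gradC φ) x + gradC φ x ⬝ᵥ (e ᵥ* jacC E x) := by
    rw [divC_smul (by fun_prop) hgrad, gradC_dotProduct he hE, jacC_const, vecMul_zero,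
      add_zero, dotProduct_comm (e ᵥ* jacC E x)]
  unfold greenField
  rw [divC_sub (by fun_prop) (by fun_prop), divC_add (by fun_prop) (by fun_prop), hfirst, hsecond,
    hthird, dotProduct_sub]
  ring

theorem flux_greenField (hM : IsMaxwellOn U α β E H) (hU : IsOpen U) (hβ : β ≠ 0) (hr : 0 ≤ r)
    (hrU : sphere 0 r ⊆ U) (e : Fin 3 → ℂ) (hφ : ∀ x ∈ sphere 0 r, ContDiffAt ℝ 2 φ x) :
    flux (greenField α e φ E H) r =
      flux (fun x => φ x • gradC (fun y => e ⬝ᵥ E y) x - (e ⬝ᵥ E x) • gradC φ x) r := by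
  have hE (x) (hx : x ∈ sphere 0 r) := hM.contDiffAt_left x (hrU hx)
  have hu (x) (hx : x ∈ sphere 0 r) : ContDiffAt ℝ 1 (fun y => e ⬝ᵥ E y) x := by
    have := hE x hx
    fun_prop
  have hcross (x) (hx : x ∈ sphere 0 r) : ContDiffAt ℝ 1 (fun y => φ y • crossC e (E y)) x := by
    have := hE x hx
    have := (hφ x hx).of_le one_le_two
    fun_prop
  have hcurlc : ContinuousOn (curlC fun y => φ y • crossC e (E y)) (sphere 0 r) := fun x hx =>
    (continuousAt_curlC (hcross x hx)).continuousWithinAt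
  have hgreenc : ContinuousOn
      (fun x => φ x • gradC (fun y => e ⬝ᵥ E y) x - (e ⬝ᵥ E x) • gradC φ x) (sphere 0 r) :=
    fun x hx => by
      have hgradu := (contDiffAt_gradC (m := 0) (hu x hx) (by simp)).continuousAt
      have hgradφ := (contDiffAt_gradC (m := 1) (hφ x hx) (by norm_num)).continuousAt
      have hφc := (hφ x hx).continuousAt
      have huc := (hu x hx).continuousAt
      exact ContinuousAt.continuousWithinAt (by fun_prop)
  rw [flux_congr hr fun x hx => hM.greenField_eq hU hβ (hrU hx) e
    ((hφ x hx).differentiableAt two_ne_zero), flux_add hr hgreenc hcurlc, flux_curlC hr hcross,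
    add_zero]

theorem isWeakHelmholtz_left (hM : IsMaxwellOn {x | a < ‖x‖} α β E H) (ha : 0 ≤ a) (hβ : β ≠ 0)
    (e : Fin 3 → ℂ) : IsWeakHelmholtz a (α * β) fun x => e ⬝ᵥ E x where
  contDiffAt x hx := by
    have := hM.contDiffAt_left x hx
    fun_prop
  hasDerivAt_flux P r hr := by
    have hU : IsOpen {x : E3 | a < ‖x‖} := isOpen_lt continuous_const continuous_norm
    have hsphere {s} (hs : a < s) : sphere (0 : E3) s ⊆ {x | a < ‖x‖} := fun x hx =>
      hs.trans_eq (mem_sphere_zero_iff_norm.1 hx).symm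
    have hP (x) : ContDiffAt ℝ 2 (polyC P) x := (contDiff_polyC P).contDiffAt
    refine ((hasDerivAt_flux (ha.trans_lt hr) fun x hx => hM.contDiffAt_greenField
      (hsphere hr hx) e (hP x)).congr_of_eventuallyEq ?_).congr_deriv ?_
    · filter_upwards [lt_mem_nhds hr] with s hs
      exact (hM.flux_greenField hU hβ (ha.trans_lt hs).le (hsphere hs) e fun x _ => hP x).symm
    · rw [← mul_neg, ← neg_one_smul ℂ (sphereIntegral _ _), ← sphereIntegral_const_smul]
      congr 1
      refine sphereIntegral_congr (ha.trans_lt hr).le fun x hx => ?_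
      simp only [hM.divC_greenField hU hβ (hsphere hr hx) e (hP x), divC_gradC_polyC,
        neg_one_smul]

end IsMaxwellOn

end MaxwellHelmholtz

section Uniqueness

open Matrix Metric Topology

variable {α β k a : ℝ} {E H : E3 → Fin 3 → ℂ}

theorem IsMaxwellOn.left_eq_zero_of_isRadiating (hM : IsMaxwellOn {x | a < ‖x‖} α β E H)
    (ha : 0 < a) (hα : 0 ≤ α) (hk : 0 < k) (hkαβ : α * β = k ^ 2)
    (hEc : ContinuousOn E {x | a ≤ ‖x‖}) (hHc : ContinuousOn H {x | a ≤ ‖x‖})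
    (hbc : ∀ x, ‖x‖ = a → (posC x ⬝ᵥ crossC (E x) (star (H x))).re ≤ 0) (hrad : IsRadiating k E)
    {x : E3} (hx : a < ‖x‖) : E x = 0 := by
  have hβ : β ≠ 0 := right_ne_zero_of_mul (hkαβ.trans_ne (pow_ne_zero 2 hk.ne'))
  have hU : IsOpen {x : E3 | a < ‖x‖} := isOpen_lt continuous_const continuous_norm
  have hflux (r : ℝ) (hr : a < r) :
      sphereIntegral r (fun x => (star (E x) ⬝ᵥ fderiv ℝ E x x).im) ≤ 0 :=
    hM.sphereIntegral_im_star_dotProduct_fderiv_self_nonpos hα hβ (ha.trans hr) hU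
      (fun x hx => hr.trans_eq (mem_sphere_zero_iff_norm.1 hx).symm)
      (hM.re_flux_crossC_star_nonpos ha hEc hHc hbc hr.le)
  ext j
  have hweak : IsWeakHelmholtz a (k ^ 2) fun x => E x j := by
    simpa [hkαβ] using hM.isWeakHelmholtz_left ha.le hβ (Pi.single j 1)
  exact hweak.eq_zero ha.le hk (hrad.isL2Decaying_component hk ha.le hM.contDiffAt_left hflux j) hx

theorem IsMaxwellOn.right_eq_zero_of_left_eq_zero {U : Set E3} (hM : IsMaxwellOn U α β E H)
    (hU : IsOpen U) (hα : α ≠ 0) (hE : ∀ x ∈ U, E x = 0) {x : E3} (hx : x ∈ U) : H x = 0 := by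
  have hEx : E =ᶠ[𝓝 x] fun _ => 0 := Filter.eventually_of_mem (hU.mem_nhds hx) hE
  have hcurl : curlC E x = 0 := (curlC_congr hEx).trans (curlC_const 0 x)
  rw [hM.curlC_left x hx] at hcurl
  simpa [hα] using hcurl

theorem eq_zero_of_continuousOn_of_lt_norm {V : Type*} [NormedAddCommGroup V] [NormedSpace ℝ V]
    {W : Type*} [Zero W] [TopologicalSpace W] [T2Space W] {F : V → W} (ha : 0 < a)
    (hF : ContinuousOn F {x | a ≤ ‖x‖}) (hF0 : ∀ x, a < ‖x‖ → F x = 0) {x : V} (hx : a ≤ ‖x‖) :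
    F x = 0 := by
  have hclosure : {x : V | a ≤ ‖x‖} ⊆ closure {x | a < ‖x‖} := by
    have hcompl : {x : V | a < ‖x‖} = (closedBall 0 a)ᶜ := by ext; simp
    rw [hcompl, closure_compl, interior_closedBall _ ha.ne']
    intro x hx
    simpa using hx
  exact Set.EqOn.of_subset_closure (f := F) (g := fun _ => 0) hF0 hF continuousOn_const
    (fun x (hx : a < ‖x‖) => hx.le) hclosure hx

theorem uniqueness_exterior_impedance_maxwell_general
    (a ω ε₀ μ₀ : ℝ) (ha : 0 < a) (hω : 0 < ω) (hε₀ : 0 < ε₀) (hμ₀ : 0 < μ₀)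
    (k : ℝ) (hk : k = ω * Real.sqrt (ε₀ * μ₀))
    (E H : E3 → Fin 3 → ℂ)
    (hEcont : ContinuousOn E {x : E3 | a ≤ ‖x‖})
    (hHcont : ContinuousOn H {x : E3 | a ≤ ‖x‖})
    (hEC1 : ContDiffOn ℝ 1 E {x : E3 | a < ‖x‖})
    (hHC1 : ContDiffOn ℝ 1 H {x : E3 | a < ‖x‖})
    (hME : ∀ x : E3, a < ‖x‖ → curlC E x = fun j => I * ω * μ₀ * H x j)
    (hMH : ∀ x : E3, a < ‖x‖ → curlC H x = fun j => -(I * ω * ε₀ * E x j))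
    (hbc : ∀ x : E3, ‖x‖ = a → (posC (a⁻¹ • x) ⬝ᵥ crossC (E x) (star (H x))).re ≤ 0)
    (hradE : IsRadiating k E) :
    ∀ x : E3, a ≤ ‖x‖ → E x = 0 ∧ H x = 0 := by
  have hU : IsOpen {x : E3 | a < ‖x‖} := isOpen_lt continuous_const continuous_norm
  have hM : IsMaxwellOn {x | a < ‖x‖} (ω * μ₀) (ω * ε₀) E H :=
    { contDiffAt_left := fun x hx => hEC1.contDiffAt (hU.mem_nhds hx)
      contDiffAt_right := fun x hx => hHC1.contDiffAt (hU.mem_nhds hx)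
      curlC_left := fun x hx => by ext j; simp [hME x hx, mul_assoc]
      curlC_right := fun x hx => by ext j; simp [hMH x hx, mul_assoc] }
  have hk2 : ω * μ₀ * (ω * ε₀) = k ^ 2 := by
    rw [hk, mul_pow, Real.sq_sqrt (by positivity)]
    ring
  have hE (x : E3) (hx : a < ‖x‖) : E x = 0 :=
    hM.left_eq_zero_of_isRadiating ha (by positivity) (hk ▸ by positivity) hk2 hEcont hHcont
      (fun x hx => nonpos_of_mul_nonpos_right (by simpa [posC_smul] using hbc x hx)
        (inv_pos.2 ha)) hradE hx
  have hH (x : E3) (hx : a < ‖x‖) : H x = 0 :=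
    hM.right_eq_zero_of_left_eq_zero hU (by positivity) hE hx
  exact fun x hx => ⟨eq_zero_of_continuousOn_of_lt_norm ha hEcont hE hx,
    eq_zero_of_continuousOn_of_lt_norm ha hHcont hH hx⟩

end Uniqueness

theorem uniqueness_exterior_impedance_maxwell
    (a ω ε₀ μ₀ : ℝ) (ha : 0 < a) (hω : 0 < ω) (hε₀ : 0 < ε₀) (hμ₀ : 0 < μ₀)
    (k : ℝ) (hk : k = ω * Real.sqrt (ε₀ * μ₀))
    (ζ : ℂ) (hζre : 0 ≤ ζ.re) (hζ0 : ζ ≠ 0)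
    (E H : E3 → Fin 3 → ℂ)
    (hEcont : ContinuousOn E {x : E3 | a ≤ ‖x‖})
    (hHcont : ContinuousOn H {x : E3 | a ≤ ‖x‖})
    (hEC1 : ContDiffOn ℝ 1 E {x : E3 | a < ‖x‖})
    (hHC1 : ContDiffOn ℝ 1 H {x : E3 | a < ‖x‖})
    -- Maxwell's equations in the exterior of the ball:
    (hME : ∀ x : E3, a < ‖x‖ →
      curlC E x = fun j => Complex.I * (ω : ℂ) * (μ₀ : ℂ) * H x j)
    (hMH : ∀ x : E3, a < ‖x‖ →
      curlC H x = fun j => -(Complex.I * (ω : ℂ) * (ε₀ : ℂ) * E x j))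
    -- Impedance boundary condition N × (E × N) = ζ (N × H) on the sphere |x| = a,
    -- with outward unit normal N = x/a:
    (hbc : ∀ x : E3, ‖x‖ = a →
      crossC (fun j => ((a⁻¹ * x j : ℝ) : ℂ))
          (crossC (E x) (fun j => ((a⁻¹ * x j : ℝ) : ℂ)))
        = fun j => ζ * crossC (fun j => ((a⁻¹ * x j : ℝ) : ℂ)) (H x) j)
    -- Sommerfeld radiation conditions: sup_{|x|=R} ‖R(∂F/∂r − ikF)‖ → 0 as R → ∞
    (hradE : ∀ ε : ℝ, 0 < ε → ∃ R₀ : ℝ, ∀ R : ℝ, R₀ ≤ R → ∀ x : E3, ‖x‖ = R →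
      ‖(R : ℝ) • (radialDeriv E x - fun j => Complex.I * (k : ℂ) * E x j)‖ ≤ ε)
    (hradH : ∀ ε : ℝ, 0 < ε → ∃ R₀ : ℝ, ∀ R : ℝ, R₀ ≤ R → ∀ x : E3, ‖x‖ = R →
      ‖(R : ℝ) • (radialDeriv H x - fun j => Complex.I * (k : ℂ) * H x j)‖ ≤ ε) :
    ∀ x : E3, a ≤ ‖x‖ → E x = 0 ∧ H x = 0 := by
  exact uniqueness_exterior_impedance_maxwell_general a ω ε₀ μ₀ ha hω hε₀ hμ₀ k hk E H hEcont hHcont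
    hEC1 hHC1 hME hMH (fun x hx => re_dotProduct_crossC_star_nonpos_of_impedance hζre
      (by simp [norm_smul, hx, abs_of_pos ha, ha.ne']) (hbc x hx)) hradE

end
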